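/- arXiv:1311.6695 — 2 statements merged into one kernel-verified Lean document; each statement's English description precedes it below -/
import Mathlib

section
/- Let ψ ∈ K̄(z) be a rational function of good reduction, and let x ∈ K̄ be a fixed point of ψ with multiplier λ = ψ'(x). Then |λ|_v ≤ 1; that is, x is indifferent or attracting, and a map of good reduction has no repelling fixed point in K̄. -/
open Polynomial

noncomputable section

namespace PaperPGR

variable {K : Type*} [Field K]

/-- The ring of integers `{x : K | v x ≤ 1}` of a non-archimedean absolute value. -/
def vints (v : AbsoluteValue K ℝ) (hna : IsNonarchimedean (⇑v)) : Subring K where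
  carrier := {x : K | v x ≤ 1}
  mul_mem' := by
    intro a b ha hb
    simp only [Set.mem_setOf_eq, map_mul] at *
    nlinarith [v.nonneg a, v.nonneg b]
  one_mem' := by simp [Set.mem_setOf_eq]
  add_mem' := by
    intro a b ha hb
    exact le_trans (hna a b) (max_le ha hb)
  zero_mem' := by simp [Set.mem_setOf_eq]
  neg_mem' := by
    intro a ha
    simpa [Set.mem_setOf_eq] using ha

/-- The maximal ideal `{x : K | v x < 1}` of the ring of integers. -/
def vmax (v : AbsoluteValue K ℝ) (hna : IsNonarchimedean (⇑v)) : Ideal (vints v hna) where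
  carrier := {x | v (x : K) < 1}
  add_mem' := by
    intro a b ha hb
    simp only [Set.mem_setOf_eq] at *
    calc v ((a : K) + (b : K)) ≤ max (v (a : K)) (v (b : K)) := hna _ _
      _ < 1 := max_lt ha hb
  zero_mem' := by simp [Set.mem_setOf_eq]
  smul_mem' := by
    intro c x hx
    simp only [Set.mem_setOf_eq, smul_eq_mul] at *
    have : v ((c : K) * (x : K)) = v (c : K) * v (x : K) := map_mul v _ _
    have hc : v (c : K) ≤ 1 := c.2
    have := v.nonneg (c : K)
    have := v.nonneg (x : K)
    calc v (((c * x : vints v hna) : K)) = v ((c : K) * (x : K)) := by norm_cast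
      _ = v (c : K) * v (x : K) := map_mul v _ _
      _ < 1 := by nlinarith

/-- View a polynomial with integral coefficients as a polynomial over `K`. -/
def liftp (v : AbsoluteValue K ℝ) (hna : IsNonarchimedean (⇑v))
    (f : Polynomial (vints v hna)) : Polynomial K :=
  f.map (vints v hna).subtype

/-- The coefficientwise reduction of `f ∈ O[z]` modulo the maximal ideal. -/
def redp (v : AbsoluteValue K ℝ) (hna : IsNonarchimedean (⇑v))
    (f : Polynomial (vints v hna)) : Polynomial ((vints v hna) ⧸ (vmax v hna)) :=
  f.map (Ideal.Quotient.mk (vmax v hna))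

/-- `(f, g)` is a normalized representation of a rational function:  `f, g ∈ O[z]` are
coprime (over `K`) and at least one coefficient of `f` or `g` has absolute value `1`. -/
def GoodRep (v : AbsoluteValue K ℝ) (hna : IsNonarchimedean (⇑v))
    (f g : Polynomial (vints v hna)) : Prop :=
  IsCoprime (liftp v hna f) (liftp v hna g) ∧
    ∃ n : ℕ, v ((f.coeff n : K)) = 1 ∨ v ((g.coeff n : K)) = 1

/-- The rational function `f/g` has good reduction: the reductions of `f` and `g` are coprime
in `k̄[z]` and the reduced degree equals `max (deg f) (deg g)`. -/
def GoodRed (v : AbsoluteValue K ℝ) (hna : IsNonarchimedean (⇑v))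
    (f g : Polynomial (vints v hna)) : Prop :=
  IsCoprime (redp v hna f) (redp v hna g) ∧
    max (redp v hna f).natDegree (redp v hna g).natDegree = max f.natDegree g.natDegree

open Classical in
/-- The self-map of `P¹(K) = K ∪ {∞}` (encoded as `Option K`, with `none = ∞`) induced by the
rational function `f/g` (for `f, g` coprime). -/
def rmap (f g : Polynomial K) : Option K → Option K
  | none =>
      if g.natDegree < f.natDegree then none
      else some (f.coeff g.natDegree / g.leadingCoeff)
  | some x => if g.eval x = 0 then none else some (f.eval x / g.eval x)

/-- The multiplier of the rational function `f/g` at a point of `P¹(K)`; at a point of `K` it is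
the value of the derivative `(f/g)' = (f'g - fg')/g²`, and at `∞` it is `ψ'(0)` for
`ψ(z) = 1/φ(1/z)`, computed via the reflections of `f` and `g` at `d = max (deg f) (deg g)`. -/
def multiplier (f g : Polynomial K) : Option K → K
  | some x => (derivative f * g - f * derivative g).eval x / g.eval x ^ 2
  | none =>
      (derivative (Polynomial.reflect (max f.natDegree g.natDegree) g) *
            Polynomial.reflect (max f.natDegree g.natDegree) f -
          Polynomial.reflect (max f.natDegree g.natDegree) g *
            derivative (Polynomial.reflect (max f.natDegree g.natDegree) f)).eval 0 /
        ((Polynomial.reflect (max f.natDegree g.natDegree) f).eval 0) ^ 2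

/-- The Möbius transformation `z ↦ (az+b)/(cz+d)` as a self-map of `P¹(K)`. -/
def mob (a b c d : K) : Option K → Option K :=
  rmap (C a * X + C b) (C c * X + C d)

/-- The rational function `f/g` (with `f, g` coprime) has potentially good reduction:
some Möbius conjugate `h ∘ (f/g) ∘ h⁻¹` admits a normalized representation `F/G` with
good reduction.  The conjugation relation is expressed as `ψ ∘ h = h ∘ φ` on `P¹(K)`. -/
def PotGoodRed (v : AbsoluteValue K ℝ) (hna : IsNonarchimedean (⇑v))
    (f g : Polynomial K) : Prop :=
  ∃ a b c d : K, a * d - b * c ≠ 0 ∧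
    ∃ F G : Polynomial (vints v hna), GoodRep v hna F G ∧ GoodRed v hna F G ∧
      rmap (liftp v hna F) (liftp v hna G) ∘ mob a b c d = mob a b c d ∘ rmap f g

/-!
Homogeneously, `f/g` has good reduction when the reductions of `f` and `g` have no common zero on
the projective line over the residue field. On the closed unit disc this makes `g` a unit at every
fixed point `y`: from `f(y) = y g(y)`, if `g(y)` reduced to `0`, so would `f(y)`. The quotient rule
then exhibits the multiplier as an integral element divided by a unit. The rest of `P¹(K)` is
brought into the disc by `z ↦ 1/z`, which carries `f/g` to `reflect d g / reflect d f`
for `d = max (deg f) (deg g)` and preserves multipliers at fixed points; the absence of a common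
zero at `∞` of the reductions is the condition on the reduced degree.
-/

section Reflect

theorem coeff_X_mul_derivative {R : Type*} [CommSemiring R] (p : R[X]) (k : ℕ) :
    (X * derivative p).coeff k = k * p.coeff k := by
  cases k with
  | zero => simp
  | succ k => simp [coeff_derivative, mul_comm]

theorem X_mul_derivative_reflect {R : Type*} [CommRing R] {N : ℕ} {p : R[X]}
    (hp : p.natDegree ≤ N) :
    X * derivative (reflect N p) = (N : R[X]) * reflect N p - reflect N (X * derivative p) := by
  ext k
  simp only [coeff_sub, coeff_natCast_mul, coeff_reflect, coeff_X_mul_derivative]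
  rcases le_or_gt k N with hk | hk
  · rw [revAt_le hk, Nat.cast_sub hk]
    ring
  · rw [revAt_eq_self_of_lt hk, coeff_eq_zero_of_natDegree_lt (hp.trans_lt hk)]
    simp

theorem eval_eq_pow_mul_eval_reflect_inv {x : K} (hx : x ≠ 0) {N : ℕ} {p : K[X]}
    (hp : p.natDegree ≤ N) : p.eval x = x ^ N * (reflect N p).eval x⁻¹ := by
  let := invertibleOfNonzero hx
  rw [mul_comm, ← invOf_eq_inv x]
  exact (eval₂_reflect_mul_pow (RingHom.id K) x N p hp).symm

theorem mul_eval_derivative_eq_reflect_inv {x : K} (hx : x ≠ 0) {N : ℕ} {p : K[X]}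
    (hp : p.natDegree ≤ N) :
    x * (derivative p).eval x =
      N * p.eval x - x ^ N * (x⁻¹ * (derivative (reflect N p)).eval x⁻¹) := by
  have hdeg : (X * derivative p).natDegree ≤ N := by
    refine natDegree_le_iff_coeff_eq_zero.mpr fun k hk => ?_
    rw [coeff_X_mul_derivative, coeff_eq_zero_of_natDegree_lt (hp.trans_lt hk), mul_zero]
  have hrefl := congrArg (eval x⁻¹) (X_mul_derivative_reflect hp)
  have hderiv := eval_eq_pow_mul_eval_reflect_inv hx hdeg
  simp only [eval_mul, eval_sub, eval_X, eval_natCast] at hrefl hderiv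
  rw [hderiv, hrefl, eval_eq_pow_mul_eval_reflect_inv hx hp]
  ring

theorem mul_eval_derivative_mul_sub_eq_reflect_inv {x : K} (hx : x ≠ 0) {N : ℕ} {p q : K[X]}
    (hp : p.natDegree ≤ N) (hq : q.natDegree ≤ N) :
    x * (derivative p * q - p * derivative q).eval x =
      (x ^ N) ^ 2 * x⁻¹ *
        (derivative (reflect N q) * reflect N p - reflect N q * derivative (reflect N p)).eval
          x⁻¹ := by
  have hp₀ := eval_eq_pow_mul_eval_reflect_inv hx hp
  have hq₀ := eval_eq_pow_mul_eval_reflect_inv hx hq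
  have hp₁ := mul_eval_derivative_eq_reflect_inv hx hp
  have hq₁ := mul_eval_derivative_eq_reflect_inv hx hq
  simp only [eval_sub, eval_mul]
  calc x * ((derivative p).eval x * q.eval x - p.eval x * (derivative q).eval x)
      = (x * (derivative p).eval x) * q.eval x - p.eval x * (x * (derivative q).eval x) := by ring
    _ = _ := by
        rw [hp₁, hq₁, hp₀, hq₀]
        ring

theorem eval_reflect_mem_iff_coeff_mem {R : Type*} [CommRing R] {I : Ideal R} {y : R}
    (hy : y ∈ I) (p : R[X]) (N : ℕ) : (reflect N p).eval y ∈ I ↔ p.coeff N ∈ I := by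
  have hcoeff : p.coeff N = (reflect N p).eval 0 := by
    rw [← coeff_zero_eq_eval_zero, coeff_reflect, revAt_le N.zero_le, Nat.sub_zero]
  have hdvd : y ∣ (reflect N p).eval y - p.coeff N := by
    simpa [hcoeff] using sub_dvd_eval_sub y 0 (reflect N p)
  have hsub := I.mem_of_dvd hdvd hy
  exact ⟨fun h => (I.sub_mem_iff_right h).mp hsub, fun h => (I.sub_mem_iff_left h).mp hsub⟩

end Reflect

theorem coeff_max_natDegree_ne_zero_or {R : Type*} [Semiring R] {p q : R[X]}
    (h : p ≠ 0 ∨ q ≠ 0) :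
    p.coeff (max p.natDegree q.natDegree) ≠ 0 ∨ q.coeff (max p.natDegree q.natDegree) ≠ 0 := by
  wlog hpq : p.natDegree ≤ q.natDegree generalizing p q
  · simpa only [max_comm, or_comm] using this h.symm (le_of_not_ge hpq)
  rw [max_eq_right hpq]
  by_contra! hcoeff
  have hq : q = 0 := leadingCoeff_eq_zero.mp hcoeff.2
  subst hq
  have hp : p.natDegree = 0 := by simpa using hpq
  rw [eq_C_of_natDegree_eq_zero hp] at h
  simp_all

theorem eval_notMem_or_of_isCoprime_map_mk {R : Type*} [CommRing R] {I : Ideal R} (hI : I ≠ ⊤)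
    {f g : R[X]}
    (h : IsCoprime (f.map (Ideal.Quotient.mk I)) (g.map (Ideal.Quotient.mk I))) (y : R) :
    f.eval y ∉ I ∨ g.eval y ∉ I := by
  have : Nontrivial (R ⧸ I) := Ideal.Quotient.nontrivial_iff.mpr hI
  have heval := h.map (evalRingHom (Ideal.Quotient.mk I y))
  simp only [coe_evalRingHom, eval_map_apply] at heval
  simpa only [ne_eq, Ideal.Quotient.eq_zero_iff_mem] using heval.ne_zero_or_ne_zero

section Inversion

variable {f g : K[X]}

theorem rmap_none_eq_none_iff : rmap f g none = none ↔ g.natDegree < f.natDegree := by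
  simp [rmap]

theorem rmap_some_eq_some_iff {x y : K} :
    rmap f g (some x) = some y ↔ g.eval x ≠ 0 ∧ f.eval x = y * g.eval x := by
  by_cases hg : g.eval x = 0 <;> simp [rmap, hg, div_eq_iff]

theorem rmap_reflect_inv_of_fixed {x : K} (hx : x ≠ 0) {N : ℕ} (hf : f.natDegree ≤ N)
    (hg : g.natDegree ≤ N) (hfix : rmap f g (some x) = some x) :
    rmap (reflect N g) (reflect N f) (some x⁻¹) = some x⁻¹ := by
  rw [rmap_some_eq_some_iff, eval_eq_pow_mul_eval_reflect_inv hx hf,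
    eval_eq_pow_mul_eval_reflect_inv hx hg] at hfix
  obtain ⟨hG, hFG⟩ := hfix
  have hxN : x ^ N ≠ 0 := pow_ne_zero N hx
  have hF : (reflect N f).eval x⁻¹ = x * (reflect N g).eval x⁻¹ :=
    mul_left_cancel₀ hxN (by rw [hFG, mul_left_comm])
  rw [rmap_some_eq_some_iff, hF, inv_mul_cancel_left₀ hx]
  exact ⟨mul_ne_zero hx (right_ne_zero_of_mul hG), rfl⟩

theorem rmap_reflect_zero_of_fixed (hfix : rmap f g none = none) :
    rmap (reflect (max f.natDegree g.natDegree) g) (reflect (max f.natDegree g.natDegree) f)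
      (some 0) = some 0 := by
  have hlt := rmap_none_eq_none_iff.mp hfix
  have hf : f ≠ 0 := by rintro rfl; simp at hlt
  rw [rmap_some_eq_some_iff, max_eq_left hlt.le]
  simp [← coeff_zero_eq_eval_zero, coeff_eq_zero_of_natDegree_lt hlt, hf]

theorem multiplier_none (f g : K[X]) :
    multiplier f g none = multiplier (reflect (max f.natDegree g.natDegree) g)
      (reflect (max f.natDegree g.natDegree) f) (some 0) :=
  rfl

theorem multiplier_reflect_inv_of_fixed {x : K} (hx : x ≠ 0) {N : ℕ} (hf : f.natDegree ≤ N)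
    (hg : g.natDegree ≤ N) (hfix : rmap f g (some x) = some x) :
    multiplier (reflect N g) (reflect N f) (some x⁻¹) = multiplier f g (some x) := by
  have hGF := (rmap_some_eq_some_iff.mp (rmap_reflect_inv_of_fixed hx hf hg hfix)).2
  have hgF : g.eval x = x ^ N * (x⁻¹ * (reflect N f).eval x⁻¹) := by
    rw [eval_eq_pow_mul_eval_reflect_inv hx hg, hGF]
  have hnum := mul_eval_derivative_mul_sub_eq_reflect_inv hx hf hg
  calc multiplier (reflect N g) (reflect N f) (some x⁻¹)
      = (derivative (reflect N g) * reflect N f - reflect N g * derivative (reflect N f)).eval x⁻¹ /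
          (reflect N f).eval x⁻¹ ^ 2 := rfl
    _ = x * (derivative f * g - f * derivative g).eval x / (x * g.eval x ^ 2) := by
        rw [hnum, hgF]
        field_simp
    _ = multiplier f g (some x) := mul_div_mul_left _ _ hx

end Inversion

section Reduction

variable {v : AbsoluteValue K ℝ} {hna : IsNonarchimedean (⇑v)} {f g : (vints v hna)[X]}

theorem vmax_ne_top : vmax v hna ≠ ⊤ := by
  rw [Ideal.ne_top_iff_one]
  simp [vmax]

theorem v_eq_one_of_notMem_vmax {y : vints v hna} (hy : y ∉ vmax v hna) : v (y : K) = 1 :=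
  le_antisymm y.2 (not_lt.mp hy)

theorem eval_liftp (f : (vints v hna)[X]) (y : vints v hna) :
    (liftp v hna f).eval (y : K) = (f.eval y : vints v hna) :=
  eval_map_apply (vints v hna).subtype y

theorem derivative_liftp (f : (vints v hna)[X]) :
    derivative (liftp v hna f) = liftp v hna (derivative f) :=
  derivative_map f _

theorem reflect_liftp (f : (vints v hna)[X]) (N : ℕ) :
    reflect N (liftp v hna f) = liftp v hna (reflect N f) :=
  reflect_map _ f N

theorem natDegree_liftp (f : (vints v hna)[X]) : (liftp v hna f).natDegree = f.natDegree :=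
  natDegree_map_eq_of_injective Subtype.val_injective f

theorem v_multiplier_liftp_le_one_of_fixed {y : vints v hna}
    (hunit : f.eval y ∉ vmax v hna ∨ g.eval y ∉ vmax v hna)
    (hfix : rmap (liftp v hna f) (liftp v hna g) (some (y : K)) = some (y : K)) :
    v (multiplier (liftp v hna f) (liftp v hna g) (some (y : K))) ≤ 1 := by
  rw [rmap_some_eq_some_iff, eval_liftp, eval_liftp] at hfix
  have hfy : f.eval y = y * g.eval y := Subtype.ext hfix.2
  have hgy : g.eval y ∉ vmax v hna := by
    rw [hfy] at hunit
    exact hunit.elim (mt ((vmax v hna).mul_mem_left y)) id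
  simp only [multiplier, derivative_liftp, eval_sub, eval_mul, eval_liftp, map_div₀, map_pow,
    v_eq_one_of_notMem_vmax hgy, one_pow, div_one]
  exact ((derivative f).eval y * g.eval y - f.eval y * (derivative g).eval y).2

theorem GoodRed.eval_notMem_vmax (h : GoodRed v hna f g) (y : vints v hna) :
    f.eval y ∉ vmax v hna ∨ g.eval y ∉ vmax v hna :=
  eval_notMem_or_of_isCoprime_map_mk vmax_ne_top h.1 y

theorem GoodRed.eval_reflect_notMem_vmax (h : GoodRed v hna f g) {y : vints v hna}
    (hy : y ∈ vmax v hna) :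
    (reflect (max f.natDegree g.natDegree) g).eval y ∉ vmax v hna ∨
      (reflect (max f.natDegree g.natDegree) f).eval y ∉ vmax v hna := by
  have : Nontrivial (vints v hna ⧸ vmax v hna) := Ideal.Quotient.nontrivial_iff.mpr vmax_ne_top
  have hcoeff := coeff_max_natDegree_ne_zero_or h.1.ne_zero_or_ne_zero
  rw [h.2] at hcoeff
  simp only [redp, coeff_map, ne_eq, Ideal.Quotient.eq_zero_iff_mem] at hcoeff
  simpa only [eval_reflect_mem_iff_coeff_mem hy] using hcoeff.symm

theorem GoodRed.v_multiplier_reflect_le_one (h : GoodRed v hna f g) {y : K} (hy : v y < 1)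
    (hfix : rmap (reflect (max f.natDegree g.natDegree) (liftp v hna g))
      (reflect (max f.natDegree g.natDegree) (liftp v hna f)) (some y) = some y) :
    v (multiplier (reflect (max f.natDegree g.natDegree) (liftp v hna g))
      (reflect (max f.natDegree g.natDegree) (liftp v hna f)) (some y)) ≤ 1 := by
  lift y to vints v hna using hy.le
  simp only [reflect_liftp] at hfix ⊢
  exact v_multiplier_liftp_le_one_of_fixed (h.eval_reflect_notMem_vmax hy) hfix

end Reduction

theorem good_reduction_no_repelling_fixed_point_general {K : Type*} [Field K]
    (v : AbsoluteValue K ℝ) (hna : IsNonarchimedean (⇑v)) (f g : (vints v hna)[X])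
    (hgood : GoodRed v hna f g) (P : Option K)
    (hfix : rmap (liftp v hna f) (liftp v hna g) P = P) :
    v (multiplier (liftp v hna f) (liftp v hna g) P) ≤ 1 := by
  cases P with
  | none =>
    rw [multiplier_none, natDegree_liftp, natDegree_liftp]
    refine hgood.v_multiplier_reflect_le_one (by simp) ?_
    simpa only [natDegree_liftp] using rmap_reflect_zero_of_fixed hfix
  | some x =>
    rcases le_or_gt (v x) 1 with hx | hx
    · lift x to vints v hna using hx
      exact v_multiplier_liftp_le_one_of_fixed (hgood.eval_notMem_vmax x) hfix
    · have hx₀ : x ≠ 0 := v.pos_iff.mp (one_pos.trans hx)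
      have hf : (liftp v hna f).natDegree ≤ max f.natDegree g.natDegree :=
        (natDegree_liftp f).trans_le (le_max_left _ _)
      have hg : (liftp v hna g).natDegree ≤ max f.natDegree g.natDegree :=
        (natDegree_liftp g).trans_le (le_max_right _ _)
      rw [← multiplier_reflect_inv_of_fixed hx₀ hf hg hfix]
      refine hgood.v_multiplier_reflect_le_one ?_ (rmap_reflect_inv_of_fixed hx₀ hf hg hfix)
      rw [map_inv₀]
      exact inv_lt_one_of_one_lt₀ hx

/-- Lemma 2 of the paper: a fixed point `x ∈ K` of a rational function of
good reduction has multiplier of absolute value at most `1`: it is indifferent or attracting,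
never repelling. -/
theorem good_reduction_no_repelling_fixed_point {K : Type*} [Field K] [IsAlgClosed K]
    (v : AbsoluteValue K ℝ) (hna : IsNonarchimedean (⇑v))
    (f g : Polynomial (vints v hna))
    (hrep : GoodRep v hna f g) (hgood : GoodRed v hna f g)
    (x : K) (hfix : rmap (liftp v hna f) (liftp v hna g) (some x) = some x) :
    v (multiplier (liftp v hna f) (liftp v hna g) (some x)) ≤ 1 :=
  good_reduction_no_repelling_fixed_point_general v hna f g hgood (some x) hfix

end PaperPGR
end
end

section
/- Let φ ∈ K̄(z) be a rational function of degree d ≥ 2 all of whose fixed points in P¹(K̄) are attracting (every multiplier λ satisfies |λ|_v < 1, where the multiplier at a fixed point ∞ is defined as ψ'(0) for ψ(z) = 1/φ(1/z)). Then φ has d + 1 distinct fixed points; let x₁, x₂, x₃ be any three of them, let h be the unique Möbius transformation over K̄ with h(x₁) = 0, h(x₂) = 1, h(x₃) = ∞, and set ψ = h ∘ φ ∘ h⁻¹. Then φ has potentially good reduction if and only if ψ has good reduction. -/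
open Polynomial

noncomputable section

namespace PaperPGR

variable {K : Type*} [Field K]

/-!
Lift `φ` to the plane by a pair of binary forms. Conjugation by `B` lifts to `B ∘ φ ∘ adj B`,
which makes sense over every commutative ring and therefore commutes with reduction modulo `M`;
hence conjugation by an element of `GL₂(O)` preserves good reduction. It preserves multipliers as
well, as can be seen on the tangent vectors `p + ε q` of the plane.

The fixed points of `φ = f / g` in `K̄` are the roots of `z g - f`, whose derivative at a fixed
point `x` of multiplier `λ` is `g(x) (1 - λ)`. As `λ ≠ 1` these roots are simple, which gives the
number of fixed points. If `φ` has good reduction and `x ∈ O` then `|g(x)| = 1`, and for another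
fixed point `y ∈ O` the difference `y - x` divides that derivative in `O`, so `|1 - λ| ≤ |y - x|`.
Since `|1 - λ| = 1` when `|λ| < 1`, distinct fixed points stay distinct modulo `M`. Now three points
of `P¹` that are distinct modulo `M` are moved to `0, 1, ∞` by an element of `GL₂(O)`. Therefore a
conjugate with good reduction yields one for which `x₁, x₂, x₃` sit at `0, 1, ∞`, and the only such
conjugate is `ψ`.
-/

open scoped Matrix

section Forms

variable {R A A' : Type*} [CommRing R] [CommRing A] [Algebra R A] [CommRing A'] [Algebra R A']

/-- The self-map of the affine plane `A²` given by the degree `d` homogenizations of a pair of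
polynomials, where `φ 0` is the numerator and `φ 1` the denominator of a rational function; it
lifts that rational function from `P¹` to `A²`. -/
def formMap (d : ℕ) (φ : Fin 2 → R[X]) (p : Fin 2 → A) : Fin 2 → A :=
  fun i ↦ MvPolynomial.aeval p ((φ i).homogenize d)

/-- The map `B ∘ φ ∘ adj B` of the affine plane. As `adj B = det B • B⁻¹`, it lifts the conjugate
of the rational function `φ` by the Möbius transformation `B`, without dividing by `det B`. -/
def conjFormMap (d : ℕ) (φ : Fin 2 → R[X]) (B : Matrix (Fin 2) (Fin 2) R) (p : Fin 2 → A) :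
    Fin 2 → A :=
  B.map (algebraMap R A) *ᵥ formMap d φ (B.adjugate.map (algebraMap R A) *ᵥ p)

/-- The conjugate of the rational function `φ` by the Möbius transformation `B`, as the pair of
polynomials dehomogenizing `conjFormMap d φ B`. -/
def conj (d : ℕ) (φ : Fin 2 → R[X]) (B : Matrix (Fin 2) (Fin 2) R) : Fin 2 → R[X] :=
  conjFormMap d φ B ![X, 1]

lemma formMap_smul (d : ℕ) (φ : Fin 2 → R[X]) (t : A) (p : Fin 2 → A) :
    formMap d φ (t • p) = t ^ d • formMap d φ p := by
  ext i
  simp only [formMap, homogenize, map_sum, Pi.smul_apply, smul_eq_mul, Finset.mul_sum]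
  refine Finset.sum_congr rfl fun kl hkl ↦ ?_
  rw [← Finset.HasAntidiagonal.mem_antidiagonal.1 hkl]
  simp [MvPolynomial.aeval_monomial, Finsupp.prod_fintype]
  ring

lemma formMap_map {S : Type*} [CommRing S] [Algebra R S] [Algebra S A] [IsScalarTower R S A]
    (d : ℕ) (φ : Fin 2 → R[X]) (p : Fin 2 → A) :
    formMap d (Polynomial.map (algebraMap R S) ∘ φ) p = formMap d φ p := by
  ext i
  simp [formMap, homogenize_map, MvPolynomial.aeval_map_algebraMap]

lemma formMap_comp (d : ℕ) (φ : Fin 2 → R[X]) (σ : A →ₐ[R] A') (p : Fin 2 → A) :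
    formMap d φ (σ ∘ p) = σ ∘ formMap d φ p := by
  ext i
  simp [formMap, MvPolynomial.comp_aeval_apply, Function.comp_def]

lemma conjFormMap_comp (d : ℕ) (φ : Fin 2 → R[X]) (B : Matrix (Fin 2) (Fin 2) R)
    (σ : A →ₐ[R] A') (p : Fin 2 → A) :
    conjFormMap d φ B (σ ∘ p) = σ ∘ conjFormMap d φ B p := by
  have mulVec_comp (B : Matrix (Fin 2) (Fin 2) R) (q : Fin 2 → A) :
      B.map (algebraMap R A') *ᵥ (σ ∘ q) = σ ∘ (B.map (algebraMap R A) *ᵥ q) := by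
    ext i
    simp [Matrix.mulVec_eq_sum, -Matrix.mulVec_fin_two]
  rw [conjFormMap, conjFormMap, mulVec_comp, formMap_comp, mulVec_comp]

lemma conjFormMap_mulVec (d : ℕ) (φ : Fin 2 → R[X]) (B : Matrix (Fin 2) (Fin 2) R)
    (p : Fin 2 → A) : conjFormMap d φ B (B.map (algebraMap R A) *ᵥ p) =
      algebraMap R A B.det ^ d • (B.map (algebraMap R A) *ᵥ formMap d φ p) := by
  have h : B.adjugate.map (algebraMap R A) * B.map (algebraMap R A) = algebraMap R A B.det • 1 := by
    rw [← Matrix.map_mul, Matrix.adjugate_mul, Matrix.map_smul' _ _ _ (by simp),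
      Matrix.map_one _ (map_zero _) (map_one _)]
  rw [conjFormMap, Matrix.mulVec_mulVec, h, Matrix.smul_mulVec, Matrix.one_mulVec, formMap_smul,
    Matrix.mulVec_smul]

lemma formMap_of_snd_eq_one {d : ℕ} {φ : Fin 2 → R[X]} (hφ : ∀ i, (φ i).natDegree ≤ d)
    (x : A) (i : Fin 2) : formMap d φ ![x, 1] i = aeval x (φ i) :=
  aeval_homogenize_of_eq_one (hφ i) _ rfl

lemma homogenize_reflect {d : ℕ} {f : R[X]} (hf : f.natDegree ≤ d) :
    (reflect d f).homogenize d = (f.homogenize d).rename (Equiv.swap 0 1) := by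
  refine homogenize_eq_of_isHomogeneous (f.isHomogeneous_homogenize.rename_isHomogeneous) ?_
  rw [MvPolynomial.aeval_rename]
  refine induction_with_natDegree_le
    (fun f ↦ MvPolynomial.aeval _ (f.homogenize d) = reflect d f) d ?_ ?_ ?_ f hf
  · simp
  · intro n r _ hn
    simp [hn, revAt_le hn]
  · intro f g _ _ hf hg
    simp only [homogenize_add, map_add, hf, hg, reflect_add]

lemma formMap_of_fst_eq_one {d : ℕ} {φ : Fin 2 → R[X]} (hφ : ∀ i, (φ i).natDegree ≤ d)
    (x : A) (i : Fin 2) : formMap d φ ![1, x] i = aeval x (reflect d (φ i)) := by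
  have h : ![x, 1] ∘ Equiv.swap (0 : Fin 2) 1 = ![1, x] := by ext j; fin_cases j <;> rfl
  rw [formMap, ← h, ← MvPolynomial.aeval_rename, ← homogenize_reflect (hφ i)]
  exact aeval_homogenize_of_eq_one (natDegree_reflect_le.trans (by simp [hφ i])) _ rfl

lemma isHomogeneous_conjFormMap_X (d : ℕ) (φ : Fin 2 → R[X]) (B : Matrix (Fin 2) (Fin 2) R)
    (i : Fin 2) : (conjFormMap d φ B (MvPolynomial.X (R := R)) i).IsHomogeneous d := by
  have mulVec (B : Matrix (Fin 2) (Fin 2) R) {n : ℕ} {q : Fin 2 → MvPolynomial (Fin 2) R}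
      (hq : ∀ j, (q j).IsHomogeneous n) (i : Fin 2) :
      ((B.map (algebraMap R _) *ᵥ q) i).IsHomogeneous n :=
    .sum _ _ _ fun j _ ↦ (hq j).C_mul _
  refine mulVec B (fun j ↦ ?_) i
  simpa only [one_mul, formMap] using ((φ j).isHomogeneous_homogenize (n := d)).aeval _
    (mulVec B.adjugate fun j ↦ MvPolynomial.isHomogeneous_X R j)

lemma conj_eq_aeval (d : ℕ) (φ : Fin 2 → R[X]) (B : Matrix (Fin 2) (Fin 2) R) (i : Fin 2) :
    MvPolynomial.aeval ![X, 1] (conjFormMap d φ B (MvPolynomial.X (R := R)) i) =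
      conj d φ B i := by
  have h : MvPolynomial.aeval ![X, 1] ∘ MvPolynomial.X (R := R) = ![(X : R[X]), 1] := by ext j; simp
  conv_rhs => rw [conj, ← h, conjFormMap_comp]
  rfl

lemma formMap_conj (d : ℕ) (φ : Fin 2 → R[X]) (B : Matrix (Fin 2) (Fin 2) R) (p : Fin 2 → A) :
    formMap d (conj d φ B) p = conjFormMap d φ B p := by
  have h : MvPolynomial.aeval p ∘ MvPolynomial.X (R := R) = p := by ext j; simp
  ext i
  rw [formMap, homogenize_eq_of_isHomogeneous (isHomogeneous_conjFormMap_X d φ B i)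
    (conj_eq_aeval d φ B i)]
  conv_rhs => rw [← h, conjFormMap_comp]
  rfl

lemma map_comp_conj {S : Type*} [CommRing S] [Algebra R S] (d : ℕ) (φ : Fin 2 → R[X])
    (B : Matrix (Fin 2) (Fin 2) R) : Polynomial.map (algebraMap R S) ∘ conj d φ B =
      conj d (Polynomial.map (algebraMap R S) ∘ φ) (B.map (algebraMap R S)) := by
  have hX : Polynomial.mapAlg R S ∘ ![X, 1] = ![X, 1] := by
    ext1 i
    fin_cases i <;> simp [mapAlg_eq_map]
  have hadj : (B.map (algebraMap R S)).adjugate = B.adjugate.map (algebraMap R S) :=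
    ((algebraMap R S).map_adjugate B).symm
  calc Polynomial.map (algebraMap R S) ∘ conj d φ B
      = Polynomial.mapAlg R S ∘ conjFormMap d φ B ![X, 1] := by
        ext1 i
        simp [conj, mapAlg_eq_map]
    _ = conjFormMap d φ B ![X, 1] := by rw [← conjFormMap_comp, hX]
    _ = conj d (Polynomial.map (algebraMap R S) ∘ φ) (B.map (algebraMap R S)) := by
      rw [conj, conjFormMap, conjFormMap, formMap_map, hadj]
      rfl

lemma natDegree_conj_le (d : ℕ) (φ : Fin 2 → R[X]) (B : Matrix (Fin 2) (Fin 2) R) (i : Fin 2) :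
    (conj d φ B i).natDegree ≤ d := by
  rw [← conj_eq_aeval]
  refine (MvPolynomial.aeval_natDegree_le _ (isHomogeneous_conjFormMap_X d φ B i).totalDegree_le
    (n := 1) _ ?_).trans (by simp)
  intro j
  fin_cases j <;> simp [natDegree_X_le]

end Forms

section LowestTerms

variable {L : Type*} [Field L]

/-- The pair of polynomials `φ` represents a rational function of degree `d` in lowest terms. -/
def IsLowestTerms (d : ℕ) (φ : Fin 2 → L[X]) : Prop :=
  IsCoprime (φ 0) (φ 1) ∧ max (φ 0).natDegree (φ 1).natDegree = d

lemma IsLowestTerms.natDegree_le {d : ℕ} {φ : Fin 2 → L[X]} (hφ : IsLowestTerms d φ) (i : Fin 2) :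
    (φ i).natDegree ≤ d := by
  rw [← hφ.2]
  fin_cases i <;> simp

lemma max_natDegree_eq_iff_exists_coeff_ne_zero {d : ℕ} {φ : Fin 2 → L[X]}
    (hcop : IsCoprime (φ 0) (φ 1)) (hdeg : ∀ i, (φ i).natDegree ≤ d) :
    max (φ 0).natDegree (φ 1).natDegree = d ↔ ∃ i, (φ i).coeff d ≠ 0 := by
  constructor
  · intro hmax
    by_contra! h
    have lt_of_ne_zero (i) (hi : φ i ≠ 0) : (φ i).natDegree < d := by
      refine (hdeg i).lt_of_ne fun hd ↦ hi (leadingCoeff_eq_zero.1 ?_)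
      rw [leadingCoeff, hd, h i]
    have hpos : 0 < d := hcop.ne_zero_or_ne_zero.elim
      (fun h ↦ (Nat.zero_le _).trans_lt (lt_of_ne_zero 0 h))
      (fun h ↦ (Nat.zero_le _).trans_lt (lt_of_ne_zero 1 h))
    have hlt (i) : (φ i).natDegree < d := by
      by_cases hi : φ i = 0
      · rwa [hi, natDegree_zero]
      · exact lt_of_ne_zero i hi
    exact (max_lt (hlt 0) (hlt 1)).ne hmax
  · rintro ⟨i, hi⟩
    have := le_natDegree_of_ne_zero hi
    refine le_antisymm (max_le (hdeg 0) (hdeg 1)) ?_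
    fin_cases i <;> simp_all

lemma exists_eq_smul_of_ne_zero {p : Fin 2 → L} (hp : p ≠ 0) :
    ∃ t : L, t ≠ 0 ∧ ((∃ x, p = t • ![x, 1]) ∨ p = t • ![1, 0]) := by
  by_cases h : p 1 = 0
  · refine ⟨p 0, fun h₀ ↦ hp ?_, .inr ?_⟩ <;> ext i <;> fin_cases i <;> simp [*]
  · refine ⟨p 1, h, .inl ⟨p 0 / p 1, ?_⟩⟩
    ext i
    fin_cases i <;> simp [h, mul_div_cancel₀]

lemma isLowestTerms_iff_formMap_eq_zero {Ω : Type*} [Field Ω] [IsAlgClosed Ω] [Algebra L Ω] {d : ℕ}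
    {φ : Fin 2 → L[X]} : IsLowestTerms d φ ↔
      (∀ i, (φ i).natDegree ≤ d) ∧ ∀ p : Fin 2 → Ω, formMap d φ p = 0 → p = 0 := by
  suffices (hdeg : ∀ i, (φ i).natDegree ≤ d) →
      (IsLowestTerms d φ ↔ ∀ p : Fin 2 → Ω, formMap d φ p = 0 → p = 0) from
    ⟨fun h ↦ ⟨h.natDegree_le, (this h.natDegree_le).1 h⟩, fun h ↦ (this h.1).2 h.2⟩
  intro hdeg
  have affine : IsCoprime (φ 0) (φ 1) ↔ ∀ x : Ω, formMap d φ ![x, 1] ≠ 0 := by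
    simp [isCoprime_iff_aeval_ne_zero_of_isAlgClosed L Ω, funext_iff, Fin.forall_fin_two,
      formMap_of_snd_eq_one hdeg, imp_iff_not_or]
  have infty : (∃ i, (φ i).coeff d ≠ 0) ↔ formMap d φ ![(1 : Ω), 0] ≠ 0 := by
    simp [funext_iff, Fin.exists_fin_two, formMap_of_fst_eq_one hdeg, imp_iff_not_or,
      aeval_def, eval₂_at_zero, coeff_reflect]
  have charts : (∀ p : Fin 2 → Ω, formMap d φ p = 0 → p = 0) ↔
      (∀ x : Ω, formMap d φ ![x, 1] ≠ 0) ∧ formMap d φ ![(1 : Ω), 0] ≠ 0 := by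
    refine ⟨fun h ↦ ⟨fun x hx ↦ ?_, fun h' ↦ ?_⟩, fun ⟨h, h'⟩ p ↦ ?_⟩
    · simpa using congr_fun (h _ hx) 1
    · simpa using congr_fun (h _ h') 0
    · contrapose!
      intro hp
      obtain ⟨t, ht, ⟨x, rfl⟩ | rfl⟩ := exists_eq_smul_of_ne_zero hp <;> rw [formMap_smul]
      · exact smul_ne_zero (pow_ne_zero _ ht) (h x)
      · exact smul_ne_zero (pow_ne_zero _ ht) h'
  rw [charts, ← affine, ← infty]
  exact and_congr_right fun hcop ↦ max_natDegree_eq_iff_exists_coeff_ne_zero hcop hdeg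

lemma IsLowestTerms.conj {d : ℕ} {φ : Fin 2 → L[X]} (hφ : IsLowestTerms d φ)
    {B : Matrix (Fin 2) (Fin 2) L} (hB : B.det ≠ 0) : IsLowestTerms d (conj d φ B) := by
  let Ω := AlgebraicClosure L
  rw [isLowestTerms_iff_formMap_eq_zero (Ω := Ω)] at hφ ⊢
  refine ⟨natDegree_conj_le d φ B, fun p hp ↦ ?_⟩
  have mulVec_eq_zero {B : Matrix (Fin 2) (Fin 2) L} (hB : B.det ≠ 0) {q : Fin 2 → Ω}
      (hq : B.map (algebraMap L Ω) *ᵥ q = 0) : q = 0 := by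
    refine Matrix.eq_zero_of_mulVec_eq_zero ?_ hq
    rwa [← RingHom.mapMatrix_apply, ← RingHom.map_det, Ne, FaithfulSMul.algebraMap_eq_zero_iff]
  rw [formMap_conj] at hp
  refine mulVec_eq_zero (B := B.adjugate) ?_ (hφ.2 _ (mulVec_eq_zero hB hp))
  simpa [Matrix.det_adjugate] using hB

lemma IsLowestTerms.formMap_ne_zero {d : ℕ} {φ : Fin 2 → L[X]} (hφ : IsLowestTerms d φ)
    {p : Fin 2 → L} (hp : p ≠ 0) : formMap d φ p ≠ 0 := by
  contrapose! hp
  have h : Algebra.ofId L (AlgebraicClosure L) ∘ p = 0 := by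
    refine (isLowestTerms_iff_formMap_eq_zero.1 hφ).2 _ ?_
    rw [formMap_comp, hp]
    ext i
    simp
  ext i
  simpa using congr_fun h i

end LowestTerms

section Points

open OnePoint

/-- The self-map of `P¹(K)` induced by the pair `φ`, with `P¹(K)` in the form that carries
Mathlib's Möbius action of `GL (Fin 2) K`. -/
def ratMap (φ : Fin 2 → K[X]) : OnePoint K → OnePoint K := rmap (φ 0) (φ 1)

lemma ratMap_infty (φ : Fin 2 → K[X]) :
    ratMap φ ∞ = if (φ 1).natDegree < (φ 0).natDegree then ∞
      else ↑((φ 0).coeff (φ 1).natDegree / (φ 1).leadingCoeff) := rfl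

lemma mulVec_ne_zero (B : GL (Fin 2) K) {p : Fin 2 → K} (hp : p ≠ 0) : B.1 *ᵥ p ≠ 0 :=
  fun h ↦ hp (Matrix.eq_zero_of_mulVec_eq_zero B.det_ne_zero h)

variable [DecidableEq K]

/-- The point of `P¹(K)` with homogeneous coordinates `p`, for `p ≠ 0`. -/
def toPoint (p : Fin 2 → K) : OnePoint K := if p 1 = 0 then ∞ else ↑(p 0 / p 1)

lemma toPoint_smul {t : K} (ht : t ≠ 0) (p : Fin 2 → K) : toPoint (t • p) = toPoint p := by
  simp only [toPoint, Pi.smul_apply, smul_eq_mul, mul_eq_zero, ht, false_or,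
    mul_div_mul_left _ _ ht]

lemma toPoint_affine (x : K) : toPoint ![x, 1] = x := by simp [toPoint]

lemma toPoint_infty : toPoint ![(1 : K), 0] = ∞ := by simp [toPoint]

lemma exists_eq_smul_of_toPoint_eq {p q : Fin 2 → K} (hp : p ≠ 0) (hq : q ≠ 0)
    (h : toPoint p = toPoint q) : ∃ t : K, p = t • q := by
  obtain ⟨s, hs, ⟨x, rfl⟩ | rfl⟩ := exists_eq_smul_of_ne_zero hp <;>
  obtain ⟨t, ht, ⟨y, rfl⟩ | rfl⟩ := exists_eq_smul_of_ne_zero hq <;>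
  simp only [toPoint_smul hs, toPoint_smul ht, toPoint_affine, toPoint_infty, coe_ne_infty,
    infty_ne_coe, coe_eq_coe] at h
  · exact ⟨s / t, by rw [h, smul_smul, div_mul_cancel₀ s ht]⟩
  · exact ⟨s / t, by rw [smul_smul, div_mul_cancel₀ s ht]⟩

lemma exists_toPoint_eq (P : OnePoint K) : ∃ p, p ≠ 0 ∧ toPoint p = P := by
  induction P with
  | infty => exact ⟨_, by simp, toPoint_infty⟩
  | coe x => exact ⟨_, by simp, toPoint_affine x⟩

lemma ratMap_coe (φ : Fin 2 → K[X]) (x : K) :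
    ratMap φ x = if (φ 1).eval x = 0 then ∞ else ↑((φ 0).eval x / (φ 1).eval x) := by
  split_ifs with h
  · exact if_pos h
  · exact if_neg h

lemma ratMap_toPoint {d : ℕ} (hd : 1 ≤ d) {φ : Fin 2 → K[X]} (hφ : IsLowestTerms d φ)
    {p : Fin 2 → K} (hp : p ≠ 0) : ratMap φ (toPoint p) = toPoint (formMap d φ p) := by
  obtain ⟨t, ht, ⟨x, rfl⟩ | rfl⟩ := exists_eq_smul_of_ne_zero hp <;>
    rw [formMap_smul, toPoint_smul ht, toPoint_smul (pow_ne_zero d ht)]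
  · rw [toPoint_affine, ratMap_coe]
    simp only [toPoint, formMap_of_snd_eq_one hφ.natDegree_le, coe_aeval_eq_eval]
  · have hform (i : Fin 2) : formMap d φ ![(1 : K), 0] i = (φ i).coeff d := by
      simp [formMap_of_fst_eq_one hφ.natDegree_le, coeff_reflect, ← coeff_zero_eq_eval_zero]
    rw [toPoint_infty, toPoint, hform, hform, ratMap_infty]
    by_cases hlt : (φ 1).natDegree < (φ 0).natDegree
    · have : (φ 1).coeff d = 0 := coeff_eq_zero_of_natDegree_lt (by have := hφ.2; omega)
      rw [if_pos hlt, if_pos this]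
    · have hdeg : (φ 1).natDegree = d := by have := hφ.2; omega
      have : (φ 1).coeff d ≠ 0 := by
        rw [← hdeg]
        exact leadingCoeff_ne_zero.2 (ne_zero_of_natDegree_gt (n := 0) (by omega))
      rw [if_neg hlt, if_neg this, leadingCoeff, hdeg]

lemma smul_toPoint (B : GL (Fin 2) K) {p : Fin 2 → K} (hp : p ≠ 0) :
    B • toPoint p = toPoint (B.1 *ᵥ p) := by
  obtain ⟨t, ht, ⟨x, rfl⟩ | rfl⟩ := exists_eq_smul_of_ne_zero hp <;>
    rw [Matrix.mulVec_smul, toPoint_smul ht, toPoint_smul ht]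
  · rw [toPoint_affine, smul_some_eq_ite]
    simp [toPoint]
  · rw [toPoint_infty, smul_infty_eq_ite]
    simp [toPoint]

lemma mob_eq_smul (B : GL (Fin 2) K) (P : OnePoint K) :
    mob (B 0 0) (B 0 1) (B 1 0) (B 1 1) P = B • P := by
  have hdet : B 0 0 * B 1 1 - B 0 1 * B 1 0 ≠ 0 := by
    simpa [Matrix.det_fin_two] using B.det_ne_zero
  change ratMap ![C (B 0 0) * X + C (B 0 1), C (B 1 0) * X + C (B 1 1)] P = _
  induction P with
  | infty =>
    rw [smul_infty_eq_ite, ratMap_infty]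
    by_cases hc : B 1 0 = 0
    · have ha : B 0 0 ≠ 0 := by rintro ha; simp [ha, hc] at hdet
      simp [hc, natDegree_linear ha]
    · have hle : (C (B 0 0) * X + C (B 0 1)).natDegree ≤ 1 := natDegree_linear_le
      rw [if_neg hc, if_neg]
      · simp [natDegree_linear hc, leadingCoeff]
      · simpa [natDegree_linear hc] using hle
  | coe x =>
    rw [smul_some_eq_ite, ratMap_coe]
    simp

lemma semiconj_ratMap_conj {d : ℕ} (hd : 1 ≤ d) {φ : Fin 2 → K[X]} (hφ : IsLowestTerms d φ)
    (B : GL (Fin 2) K) : Function.Semiconj (B • ·) (ratMap φ) (ratMap (conj d φ B)) := by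
  intro P
  obtain ⟨p, hp, rfl⟩ := exists_toPoint_eq P
  have hconj : conjFormMap d φ B.1 (B.1 *ᵥ p) = B.1.det ^ d • (B.1 *ᵥ formMap d φ p) :=
    conjFormMap_mulVec d φ B.1 p
  dsimp only
  rw [smul_toPoint B hp, ratMap_toPoint hd (hφ.conj B.det_ne_zero) (mulVec_ne_zero B hp),
    ratMap_toPoint hd hφ hp, smul_toPoint B (hφ.formMap_ne_zero hp), formMap_conj, hconj,
    toPoint_smul (pow_ne_zero d B.det_ne_zero)]

end Points

section Multiplier

open OnePoint DualNumber TrivSqZeroExt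

/-- The multiplier at a point of `P¹(K)` of the rational function given by the pair `φ`. -/
def mult (φ : Fin 2 → K[X]) : OnePoint K → K := multiplier (φ 0) (φ 1)

/-- The determinant `p ∧ q` of two vectors of the plane, which measures to first order how far
the points of `P¹` that they represent are from each other. -/
def wedge {A : Type*} [CommRing A] (p q : Fin 2 → A) : A := p 0 * q 1 - p 1 * q 0

lemma wedge_smul_smul {A : Type*} [CommRing A] (s t : A) (p q : Fin 2 → A) :
    wedge (s • p) (t • q) = s * t * wedge p q := by
  simp only [wedge, Pi.smul_apply, smul_eq_mul]
  ring

lemma wedge_mulVec {A : Type*} [CommRing A] (B : Matrix (Fin 2) (Fin 2) A) (p q : Fin 2 → A) :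
    wedge (B *ᵥ p) (B *ᵥ q) = B.det * wedge p q := by
  simp [wedge, Matrix.det_fin_two]
  ring

lemma eval_derivative_X_mul_sub {φ : Fin 2 → K[X]} {x : K}
    (hfix : (φ 0).eval x = x * (φ 1).eval x) (hne : (φ 1).eval x ≠ 0) :
    (derivative (X * φ 1 - φ 0)).eval x = (φ 1).eval x * (1 - mult φ x) := by
  have hmult : mult φ x = (derivative (φ 0) * φ 1 - φ 0 * derivative (φ 1)).eval x /
    (φ 1).eval x ^ 2 := rfl
  rw [hmult]
  simp only [derivative_sub, derivative_mul, derivative_X, eval_sub, eval_add, eval_mul,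
    eval_X, one_mul, hfix]
  field_simp
  ring

lemma aeval_dualNumber (f : K[X]) (z : K[ε]) :
    aeval z f = inl (f.eval z.fst) + inl ((derivative f).eval z.fst) * inr z.snd := by
  have hinl (g : K[X]) : aeval (inl z.fst : K[ε]) g = inl (g.eval z.fst) :=
    aeval_algebraMap_apply_eq_algebraMap_eval z.fst g
  rw [← inl_fst_add_inr_snd_eq z, aeval_add_of_sq_eq_zero _ _ _ (by simp [sq]), hinl, hinl]
  simp

lemma wedge_formMap_affine {d : ℕ} {φ : Fin 2 → K[X]} (hdeg : ∀ i, (φ i).natDegree ≤ d) (z : K[ε])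
    {ν : K} (hν : ν ≠ 0) (hfix : formMap d φ ![z.fst, 1] = ν • ![z.fst, 1]) :
    wedge ![z, 1] (formMap d φ ![z, 1]) =
      (ν * (mult φ z.fst - 1)) • wedge ![inl z.fst, 1] ![z, 1] := by
  have h₀ : (φ 0).eval z.fst = z.fst * ν := by
    simpa [formMap_of_snd_eq_one hdeg, mul_comm] using congr_fun hfix 0
  have h₁ : (φ 1).eval z.fst = ν := by
    simpa [formMap_of_snd_eq_one hdeg] using congr_fun hfix 1
  have hder := eval_derivative_X_mul_sub (φ := φ) (x := z.fst) (by rw [h₀, h₁]) (by rwa [h₁])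
  calc wedge ![z, 1] (formMap d φ ![z, 1]) = aeval z (X * φ 1 - φ 0) := by
        simp [wedge, formMap_of_snd_eq_one hdeg]
    _ = inl (ν * (1 - mult φ z.fst)) * inr z.snd := by
        rw [aeval_dualNumber, hder, h₁]
        simp [h₀, h₁]
    _ = _ := by
      ext <;> simp [wedge]
      ring

lemma wedge_formMap_infty {d : ℕ} {φ : Fin 2 → K[X]} (hφ : IsLowestTerms d φ) {z : K[ε]}
    (hz : z.fst = 0) {ν : K} (hν : ν ≠ 0) (hfix : formMap d φ ![(1 : K), 0] = ν • ![(1 : K), 0]) :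
    wedge ![1, z] (formMap d φ ![1, z]) =
      (ν * (mult φ ∞ - 1)) • wedge ![1, 0] ![1, z] := by
  let ψ := ![reflect d (φ 1), reflect d (φ 0)]
  have hdeg (i) : (ψ i).natDegree ≤ d := by
    fin_cases i <;> exact natDegree_reflect_le.trans (by simp [hφ.natDegree_le])
  have hψ {A : Type _} [CommRing A] [Algebra K A] (x : A) :
      formMap d ψ ![x, 1] = ![formMap d φ ![1, x] 1, formMap d φ ![1, x] 0] := by
    ext i
    rw [formMap_of_snd_eq_one hdeg]
    fin_cases i <;> exact (formMap_of_fst_eq_one hφ.natDegree_le _ _).symm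
  have hmult : mult ψ (0 : K) = mult φ ∞ := by
    obtain ⟨-, rfl⟩ := hφ
    rfl
  have h := wedge_formMap_affine hdeg z hν (by rw [hz, hψ, hfix]; simp)
  rw [hψ, hz, hmult] at h
  simp [wedge] at h ⊢
  linear_combination -h

lemma fst_comp_smul (u : K[ε]) (p : Fin 2 → K[ε]) : fst ∘ (u • p) = u.fst • (fst ∘ p) := by
  ext i
  simp

lemma wedge_formMap_smul_of_eq {d : ℕ} {φ : Fin 2 → K[X]} {q : Fin 2 → K[ε]} {c : K}
    (hq : ∀ ν, formMap d φ (fst ∘ q) = ν • (fst ∘ q) →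
      wedge q (formMap d φ q) = (ν * c) • wedge (inl ∘ fst ∘ q) q)
    {u : K[ε]} (hu : u.fst ≠ 0) {μ : K}
    (hfix : formMap d φ (fst ∘ (u • q)) = μ • (fst ∘ (u • q))) :
    wedge (u • q) (formMap d φ (u • q)) = (μ * c) • wedge (inl ∘ fst ∘ (u • q)) (u • q) := by
  have hinl : inl ∘ fst ∘ (u • q) = (inl u.fst : K[ε]) • (inl ∘ fst ∘ q : Fin 2 → K[ε]) := by
    ext i <;> simp
  rw [fst_comp_smul, formMap_smul, smul_smul] at hfix
  have hq := hq (μ * u.fst / u.fst ^ d) <| by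
    rw [div_eq_inv_mul, mul_smul, ← hfix, inv_smul_smul₀ (pow_ne_zero d hu)]
  have hfst_wedge : (wedge (inl ∘ fst ∘ q) q).fst = 0 := by simp [wedge, mul_comm]
  rw [formMap_smul, wedge_smul_smul, hq, hinl, wedge_smul_smul]
  ext
  · simp [hfst_wedge]
  · simp [hfst_wedge]
    field_simp

lemma exists_eq_smul_of_fst_comp_ne_zero {p : Fin 2 → K[ε]} (hp : fst ∘ p ≠ 0) :
    ∃ u z : K[ε], u.fst ≠ 0 ∧ (p = u • ![z, 1] ∨ z.fst = 0 ∧ p = u • ![1, z]) := by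
  by_cases h : (p 1).fst = 0
  · have h₀ : (p 0).fst ≠ 0 := fun h₀ ↦ hp (by ext i; fin_cases i <;> simp [h₀, h])
    obtain ⟨z, hz⟩ := (isUnit_iff_isUnit_fst.2 h₀.isUnit).dvd (a := p 1)
    refine ⟨p 0, z, h₀, .inr ⟨by simpa [h, h₀] using congr_arg fst hz, ?_⟩⟩
    ext1 i
    fin_cases i <;> simp [hz]
  · obtain ⟨z, hz⟩ := (isUnit_iff_isUnit_fst.2 (Ne.isUnit h)).dvd (a := p 0)
    refine ⟨p 1, z, h, .inl ?_⟩
    ext1 i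
    fin_cases i <;> simp [hz]

-- A homogeneous version of `φ (x + ε) = x + λ ε` at a fixed point `x` of multiplier `λ`: it makes
-- sense at `∞` as well and transforms well under `GL₂`, whence the invariance of the multiplier.
lemma wedge_formMap_dualNumber [DecidableEq K] {d : ℕ} {φ : Fin 2 → K[X]} (hφ : IsLowestTerms d φ)
    {p : Fin 2 → K[ε]} (hp : fst ∘ p ≠ 0) {μ : K}
    (hfix : formMap d φ (fst ∘ p) = μ • (fst ∘ p)) :
    wedge p (formMap d φ p) =
      (μ * (mult φ (toPoint (fst ∘ p)) - 1)) • wedge (inl ∘ fst ∘ p) p := by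
  have ne_zero {q : Fin 2 → K} (hq : q ≠ 0) {ν : K} (h : formMap d φ q = ν • q) : ν ≠ 0 := by
    rintro rfl
    exact hφ.formMap_ne_zero hq (by rw [h, zero_smul])
  obtain ⟨u, z, hu, rfl | ⟨hz, rfl⟩⟩ := exists_eq_smul_of_fst_comp_ne_zero hp
  · have hfst : fst ∘ ![z, 1] = ![z.fst, 1] := by ext i; fin_cases i <;> rfl
    have hinl : inl ∘ ![z.fst, 1] = (![inl z.fst, 1] : Fin 2 → K[ε]) := by
      ext1 i; fin_cases i <;> rfl
    rw [fst_comp_smul, toPoint_smul hu, hfst, toPoint_affine, ← hfst, ← fst_comp_smul]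
    refine wedge_formMap_smul_of_eq (fun ν hν ↦ ?_) hu hfix
    rw [hfst] at hν ⊢
    rw [hinl]
    exact wedge_formMap_affine hφ.natDegree_le z (ne_zero (by simp) hν) hν
  · have hfst : fst ∘ ![1, z] = ![(1 : K), 0] := by ext i; fin_cases i <;> simp [hz]
    have hinl : inl ∘ ![(1 : K), 0] = (![1, 0] : Fin 2 → K[ε]) := by
      ext1 i; fin_cases i <;> simp
    rw [fst_comp_smul, toPoint_smul hu, hfst, toPoint_infty, ← hfst, ← fst_comp_smul]
    refine wedge_formMap_smul_of_eq (fun ν hν ↦ ?_) hu hfix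
    rw [hfst] at hν ⊢
    rw [hinl]
    exact wedge_formMap_infty hφ hz (ne_zero (by simp) hν) hν

lemma exists_toPoint_fst_comp_eq [DecidableEq K] (P : OnePoint K) : ∃ p : Fin 2 → K[ε],
    fst ∘ p ≠ 0 ∧ toPoint (fst ∘ p) = P ∧ wedge (inl ∘ fst ∘ p) p ≠ 0 := by
  induction P with
  | infty =>
    exact ⟨![1, ε], by simp [funext_iff], by simp [toPoint], by simp [wedge, TrivSqZeroExt.ext_iff]⟩
  | coe x =>
    exact ⟨![inl x + ε, 1], by simp [funext_iff], by simp [toPoint],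
      by simp [wedge, TrivSqZeroExt.ext_iff]⟩

lemma mult_conj [DecidableEq K] {d : ℕ} (hd : 1 ≤ d) {φ : Fin 2 → K[X]} (hφ : IsLowestTerms d φ)
    (B : GL (Fin 2) K) {P : OnePoint K} (hP : ratMap φ P = P) :
    mult (conj d φ B) (B • P) = mult φ P := by
  obtain ⟨p, hp, rfl, hw⟩ := exists_toPoint_fst_comp_eq P
  obtain ⟨μ, hμ⟩ := exists_eq_smul_of_toPoint_eq (hφ.formMap_ne_zero hp) hp
    (by rw [← ratMap_toPoint hd hφ hp, hP])
  let B' := B.1.map (algebraMap K K[ε])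
  have hfst : fst ∘ (B' *ᵥ p) = B.1 *ᵥ (fst ∘ p) := by
    ext i
    fin_cases i <;> simp [B', algebraMap_eq_inl]
  have hinl : inl ∘ fst ∘ (B' *ᵥ p) = B' *ᵥ (inl ∘ fst ∘ p) := by
    ext i <;> fin_cases i <;> simp [B', algebraMap_eq_inl]
  have hdet : B'.det = algebraMap K K[ε] B.1.det := by
    simp [B', Matrix.det_fin_two, algebraMap_eq_inl]
  have hconj : formMap d (conj d φ B) (fst ∘ (B' *ᵥ p)) =
      (B.1.det ^ d * μ) • (fst ∘ (B' *ᵥ p)) := by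
    have : conjFormMap d φ B.1 (B.1 *ᵥ (fst ∘ p)) =
      B.1.det ^ d • (B.1 *ᵥ formMap d φ (fst ∘ p)) := conjFormMap_mulVec d φ B.1 _
    rw [formMap_conj, hfst, this, hμ, Matrix.mulVec_smul, smul_smul]
  have hφp := wedge_formMap_dualNumber hφ hp hμ
  have hψp := wedge_formMap_dualNumber (hφ.conj B.det_ne_zero)
    (hfst ▸ mulVec_ne_zero B hp) hconj
  rw [formMap_conj, conjFormMap_mulVec, ← one_smul K[ε] (B' *ᵥ p), wedge_smul_smul] at hψp
  rw [wedge_mulVec, hφp, one_smul, hinl, wedge_mulVec, hdet, hfst, ← smul_toPoint B hp] at hψp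
  simp only [one_mul, ← map_pow, ← Algebra.smul_def, smul_smul] at hψp
  have hne : B.1.det ^ d * μ * B.1.det ≠ 0 := by
    refine mul_ne_zero (mul_ne_zero (pow_ne_zero d B.det_ne_zero) ?_) B.det_ne_zero
    rintro rfl
    exact hφ.formMap_ne_zero hp (by rw [hμ, zero_smul])
  refine mul_left_cancel₀ hne ?_
  linear_combination -smul_left_injective K hw hψp

end Multiplier

section Uniqueness

open OnePoint

lemma ratMap_coe_eq_iff {φ ψ : Fin 2 → K[X]} (hφ : IsCoprime (φ 0) (φ 1))
    (hψ : IsCoprime (ψ 0) (ψ 1)) (x : K) :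
    ratMap φ x = ratMap ψ x ↔ (φ 0).eval x * (ψ 1).eval x = (ψ 0).eval x * (φ 1).eval x := by
  classical
  have eval_ne_zero {χ : Fin 2 → K[X]} (hχ : IsCoprime (χ 0) (χ 1)) (h : (χ 1).eval x = 0) :
      (χ 0).eval x ≠ 0 := by
    simpa [h] using (isCoprime_iff_aeval_ne_zero _ _).1 hχ x
  rw [ratMap_coe, ratMap_coe]
  split_ifs with h h' h'
  · simp [h, h']
  · simp [h, h', eval_ne_zero hφ h]
  · simp [h, h', eval_ne_zero hψ h']
  · rw [coe_eq_coe, div_eq_div_iff h h']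

lemma exists_eq_C_mul_of_ratMap_eq [Infinite K] {φ ψ : Fin 2 → K[X]}
    (hφ : IsCoprime (φ 0) (φ 1)) (hψ : IsCoprime (ψ 0) (ψ 1)) (h : ratMap φ = ratMap ψ) :
    ∃ t : K, t ≠ 0 ∧ ψ = fun i ↦ C t * φ i := by
  have cross : φ 0 * ψ 1 = ψ 0 * φ 1 := Polynomial.funext fun x ↦ by
    simpa using (ratMap_coe_eq_iff hφ hψ x).1 (congr_fun h x)
  obtain ⟨a, b, hab⟩ := hφ
  have h₀ : ψ 0 = (a * ψ 0 + b * ψ 1) * φ 0 := by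
    linear_combination ψ 0 * (-hab) - b * cross
  have h₁ : ψ 1 = (a * ψ 0 + b * ψ 1) * φ 1 := by
    linear_combination ψ 1 * (-hab) + a * cross
  obtain ⟨t, ht, htC⟩ := Polynomial.isUnit_iff.1
    (hψ.isUnit_of_dvd' (Dvd.intro _ h₀.symm) (Dvd.intro _ h₁.symm))
  rw [← htC] at h₀ h₁
  refine ⟨t, ht.ne_zero, ?_⟩
  ext1 i
  fin_cases i
  exacts [h₀, h₁]

lemma mult_C_mul {t : K} (ht : t ≠ 0) (φ : Fin 2 → K[X]) (P : OnePoint K) :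
    mult (fun i ↦ C t * φ i) P = mult φ P := by
  induction P with
  | infty =>
    change multiplier _ _ none = multiplier _ _ none
    simp only [multiplier, natDegree_C_mul ht, reflect_C_mul, derivative_C_mul, eval_sub, eval_mul,
      eval_C]
    field_simp
  | coe x =>
    change multiplier _ _ (Option.some x) = multiplier _ _ (Option.some x)
    simp only [multiplier, derivative_C_mul, eval_sub, eval_mul, eval_C]
    field_simp

lemma isLowestTerms_and_mult_eq_of_semiconj [Infinite K] [DecidableEq K] {d : ℕ} (hd : 1 ≤ d)
    {φ ψ : Fin 2 → K[X]} (hφ : IsLowestTerms d φ) (hψ : IsCoprime (ψ 0) (ψ 1)) {B : GL (Fin 2) K}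
    (h : Function.Semiconj (B • ·) (ratMap φ) (ratMap ψ)) :
    IsLowestTerms d ψ ∧ ∀ P, ratMap φ P = P → mult ψ (B • P) = mult φ P := by
  have heq : ratMap (conj d φ B) = ratMap ψ := by
    ext1 P
    obtain ⟨P, rfl⟩ := MulAction.surjective B P
    exact (semiconj_ratMap_conj hd hφ B P).symm.trans (h P)
  obtain ⟨t, ht, rfl⟩ := exists_eq_C_mul_of_ratMap_eq (hφ.conj B.det_ne_zero).1 hψ heq
  refine ⟨⟨hψ, ?_⟩, fun P hP ↦ ?_⟩
  · simpa only [natDegree_C_mul ht] using (hφ.conj B.det_ne_zero).2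
  · rw [mult_C_mul ht, mult_conj hd hφ B hP]

end Uniqueness

section Counting

open OnePoint

lemma ncard_isRoot_eq_natDegree [IsAlgClosed K] {p : K[X]}
    (hp : ∀ x, p.IsRoot x → (derivative p).eval x ≠ 0) : {x | p.IsRoot x}.ncard = p.natDegree := by
  classical
  have hp₀ : p ≠ 0 := by
    rintro rfl
    simpa using hp 0
  have hnodup : p.roots.Nodup := by
    refine Multiset.nodup_iff_count_le_one.2 fun x ↦ ?_
    rw [count_roots]
    by_contra! h
    have := (one_lt_rootMultiplicity_iff_isRoot hp₀).1 h
    exact hp x this.1 this.2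
  have hset : {x | p.IsRoot x} = p.roots.toFinset := by
    ext x
    simp [hp₀]
  rw [hset, Set.ncard_coe_finset, Multiset.toFinset_card_of_nodup hnodup,
    (IsAlgClosed.splits p).natDegree_eq_card_roots]

lemma ratMap_infty_eq_infty_iff {d : ℕ} (hd : 1 ≤ d) {φ : Fin 2 → K[X]} (hφ : IsLowestTerms d φ) :
    ratMap φ ∞ = ∞ ↔ (φ 1).coeff d = 0 := by
  classical
  rw [← toPoint_infty, ratMap_toPoint hd hφ (by simp)]
  simp [toPoint, formMap_of_fst_eq_one hφ.natDegree_le, coeff_reflect, ← coeff_zero_eq_eval_zero]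

lemma natDegree_X_mul_sub_of_ratMap_infty_ne {d : ℕ} (hd : 1 ≤ d) {φ : Fin 2 → K[X]}
    (hφ : IsLowestTerms d φ) (h : ratMap φ ∞ ≠ ∞) : (X * φ 1 - φ 0).natDegree = d + 1 := by
  have hcoeff : (X * φ 1 - φ 0).coeff (d + 1) = (φ 1).coeff d := by
    rw [coeff_sub, coeff_X_mul, coeff_eq_zero_of_natDegree_lt (p := φ 0), sub_zero]
    exact Nat.lt_succ_of_le (hφ.natDegree_le 0)
  refine natDegree_eq_of_le_of_coeff_ne_zero ?_ (by rwa [hcoeff, Ne,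
    ← ratMap_infty_eq_infty_iff hd hφ])
  exact (natDegree_sub_le_of_le (natDegree_mul_le_of_le natDegree_X_le (hφ.natDegree_le 1))
    (hφ.natDegree_le 0)).trans (by omega)

lemma natDegree_X_mul_sub_of_ratMap_infty_eq {d : ℕ} (hd : 1 ≤ d) {φ : Fin 2 → K[X]}
    (hφ : IsLowestTerms d φ) (h : ratMap φ ∞ = ∞) (hmult : mult φ ∞ ≠ 1) :
    (X * φ 1 - φ 0).natDegree = d := by
  have h₁ : (φ 1).coeff d = 0 := (ratMap_infty_eq_infty_iff hd hφ).1 h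
  have h₀ : (φ 0).coeff d ≠ 0 := by
    obtain ⟨i, hi⟩ := (max_natDegree_eq_iff_exists_coeff_ne_zero hφ.1 hφ.natDegree_le).1 hφ.2
    fin_cases i
    exacts [hi, absurd h₁ hi]
  obtain ⟨e, rfl⟩ := Nat.exists_eq_add_of_le' hd
  have hmult_eq : mult φ ∞ = (φ 1).coeff e / (φ 0).coeff (e + 1) := by
    change multiplier (φ 0) (φ 1) none = _
    rw [multiplier, hφ.2]
    simp only [eval_sub, eval_mul, ← coeff_zero_eq_eval_zero, coeff_derivative, coeff_reflect]
    simp [revAt_le, h₁]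
    field_simp
  refine natDegree_eq_of_le_of_coeff_ne_zero ?_ ?_
  · have hle : (φ 1).natDegree ≤ e := natDegree_le_pred (hφ.natDegree_le 1) h₁
    exact (natDegree_sub_le_of_le (natDegree_mul_le_of_le natDegree_X_le hle)
      (hφ.natDegree_le 0)).trans (by omega)
  · rw [coeff_sub, coeff_X_mul, sub_ne_zero]
    simpa [hmult_eq, div_eq_one_iff_eq h₀] using hmult

lemma ratMap_coe_eq_self_iff {φ : Fin 2 → K[X]} (hφ : IsCoprime (φ 0) (φ 1)) (x : K) :
    ratMap φ x = x ↔ (X * φ 1 - φ 0).IsRoot x := by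
  classical
  rw [ratMap_coe, IsRoot.def, eval_sub, eval_mul, eval_X]
  split_ifs with h
  · simpa [h] using (isCoprime_iff_aeval_ne_zero _ _).1 hφ x
  · rw [coe_eq_coe, div_eq_iff h, sub_eq_zero, eq_comm]

lemma ncard_ratMap_eq_self [IsAlgClosed K] {d : ℕ} (hd : 1 ≤ d) {φ : Fin 2 → K[X]}
    (hφ : IsLowestTerms d φ) (hmult : ∀ P, ratMap φ P = P → mult φ P ≠ 1) :
    {P | ratMap φ P = P}.ncard = d + 1 := by
  have hroots : {x | (X * φ 1 - φ 0).IsRoot x}.ncard = (X * φ 1 - φ 0).natDegree := by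
    refine ncard_isRoot_eq_natDegree fun x hx ↦ ?_
    have h₀ : (φ 0).eval x = x * (φ 1).eval x := by
      simpa [sub_eq_zero, eq_comm (a := (φ 0).eval x)] using hx
    have h₁ : (φ 1).eval x ≠ 0 := by
      intro h₁
      simpa [h₀, h₁] using (isCoprime_iff_aeval_ne_zero _ _).1 hφ.1 x
    rw [eval_derivative_X_mul_sub h₀ h₁]
    refine mul_ne_zero h₁ (sub_ne_zero.2 (hmult x ?_).symm)
    exact (ratMap_coe_eq_self_iff hφ.1 x).2 hx
  have hinj : ((↑) '' {x : K | (X * φ 1 - φ 0).IsRoot x} : Set (OnePoint K)).ncard =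
      (X * φ 1 - φ 0).natDegree := by
    rw [Set.ncard_image_of_injective _ coe_injective, hroots]
  by_cases h : ratMap φ ∞ = ∞
  · have hfix : {P | ratMap φ P = P} = insert ∞ ((↑) '' {x : K | (X * φ 1 - φ 0).IsRoot x}) := by
      ext P
      induction P with
      | infty => simp [h]
      | coe x => simp [ratMap_coe_eq_self_iff hφ.1]
    rw [natDegree_X_mul_sub_of_ratMap_infty_eq hd hφ h (hmult ∞ h)] at hinj
    rw [hfix, Set.ncard_insert_of_notMem (by simp) (Set.finite_of_ncard_ne_zero (by omega)), hinj]
  · have hfix : {P | ratMap φ P = P} = (↑) '' {x : K | (X * φ 1 - φ 0).IsRoot x} := by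
      ext P
      induction P with
      | infty => simp [h]
      | coe x => simp [ratMap_coe_eq_self_iff hφ.1]
    rw [hfix, hinj, natDegree_X_mul_sub_of_ratMap_infty_ne hd hφ h]

end Counting

section GoodReduction

open OnePoint

variable {v : AbsoluteValue K ℝ} {hna : IsNonarchimedean (⇑v)}

instance : (vmax v hna).IsMaximal := by
  refine Ideal.isMaximal_iff.2 ⟨fun h ↦ ?_, fun J x _ hx hxJ ↦ ?_⟩
  · have h1 : v (1 : K) < 1 := h
    exact h1.ne v.map_one
  · have hvx : v (x : K) = 1 := x.2.antisymm (not_lt.1 hx)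
    let y : vints v hna := ⟨(x : K)⁻¹, by simp [vints, hvx]⟩
    have hyx : y * x = 1 := Subtype.ext <| inv_mul_cancel₀ (v.ne_zero_iff.1 (by simp [hvx]))
    exact hyx ▸ J.mul_mem_left y hxJ

instance : Field (vints v hna ⧸ vmax v hna) := Ideal.Quotient.field _

lemma residue_eq_zero_iff (x : vints v hna) :
    algebraMap (vints v hna) (vints v hna ⧸ vmax v hna) x = 0 ↔ v (x : K) < 1 :=
  Ideal.Quotient.eq_zero_iff_mem

lemma goodRep_and_goodRed_iff {Ψ : Fin 2 → (vints v hna)[X]} :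
    GoodRep v hna (Ψ 0) (Ψ 1) ∧ GoodRed v hna (Ψ 0) (Ψ 1) ↔
      ∃ d, IsLowestTerms d (Polynomial.map (algebraMap _ K) ∘ Ψ) ∧
        IsLowestTerms d (Polynomial.map (algebraMap _ (vints v hna ⧸ vmax v hna)) ∘ Ψ) := by
  have hlift (i : Fin 2) : ((Ψ i).map (algebraMap _ K)).natDegree = (Ψ i).natDegree :=
    natDegree_map_eq_of_injective (FaithfulSMul.algebraMap_injective _ K) _
  constructor
  · rintro ⟨⟨hcop, -⟩, hred, hdeg⟩
    exact ⟨_, ⟨hcop, congr_arg₂ max (hlift 0) (hlift 1)⟩, hred, hdeg⟩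
  · rintro ⟨d, hψ, hψ'⟩
    have hdeg : max (Ψ 0).natDegree (Ψ 1).natDegree = d := by
      rw [← hψ.2, ← hlift 0, ← hlift 1]
      rfl
    refine ⟨⟨hψ.1, d, ?_⟩, hψ'.1, hψ'.2.trans hdeg.symm⟩
    obtain ⟨i, hi⟩ :=
      (max_natDegree_eq_iff_exists_coeff_ne_zero hψ'.1 hψ'.natDegree_le).1 hψ'.2
    rw [Function.comp_apply, coeff_map, Ne, residue_eq_zero_iff, not_lt] at hi
    have := ((Ψ i).coeff d).2.antisymm hi
    fin_cases i
    exacts [.inl this, .inr this]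

lemma sub_dvd_eval_derivative {R : Type*} [CommRing R] [IsDomain R] {p : R[X]} {x y : R}
    (hx : p.IsRoot x) (hy : p.IsRoot y) (hxy : x ≠ y) : y - x ∣ (derivative p).eval x := by
  obtain ⟨q, rfl⟩ := dvd_iff_isRoot.2 hx
  have hq : q.eval y = 0 := by simpa [sub_eq_zero, hxy.symm] using hy
  simpa [hq] using sub_dvd_eval_sub y x q

lemma abs_le_abs_of_dvd {x y : vints v hna} (h : x ∣ y) : v (y : K) ≤ v (x : K) := by
  obtain ⟨c, rfl⟩ := h
  simpa using mul_le_of_le_one_right (v.nonneg x) c.2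

lemma abs_one_sub_mult_le_abs_sub {Ψ : Fin 2 → (vints v hna)[X]}
    (hlift : IsCoprime ((Ψ 0).map (algebraMap _ K)) ((Ψ 1).map (algebraMap _ K)))
    (hres : IsCoprime ((Ψ 0).map (algebraMap _ (vints v hna ⧸ vmax v hna)))
      ((Ψ 1).map (algebraMap _ (vints v hna ⧸ vmax v hna))))
    {x y : vints v hna} (hxy : x ≠ y)
    (hx : ratMap (Polynomial.map (algebraMap _ K) ∘ Ψ) (x : K) = (x : K))
    (hy : ratMap (Polynomial.map (algebraMap _ K) ∘ Ψ) (y : K) = (y : K)) :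
    v (1 - mult (Polynomial.map (algebraMap _ K) ∘ Ψ) (x : K)) ≤ v (y - x : K) := by
  let ψ := Polynomial.map (algebraMap (vints v hna) K) ∘ Ψ
  have hmap : X * ψ 1 - ψ 0 = (X * Ψ 1 - Ψ 0).map (algebraMap _ K) := by simp [ψ]
  have eval_lift (f : (vints v hna)[X]) (z : vints v hna) :
      (f.map (algebraMap _ K)).eval (z : K) = ↑(f.eval z) := eval_map_apply (algebraMap _ K) z
  have isRoot {z : vints v hna} (hz : ratMap ψ (z : K) = (z : K)) : (X * Ψ 1 - Ψ 0).IsRoot z := by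
    rw [ratMap_coe_eq_self_iff (φ := ψ) hlift, hmap, IsRoot, eval_lift] at hz
    exact_mod_cast hz
  have hx₀ : (Ψ 0).eval x = x * (Ψ 1).eval x := by
    simpa [sub_eq_zero, eq_comm (a := (Ψ 0).eval x)] using isRoot hx
  have hx₁ : v ((Ψ 1).eval x : vints v hna) = 1 := by
    refine ((Ψ 1).eval x).2.antisymm (not_lt.1 fun hlt ↦ ?_)
    have hcop := (isCoprime_iff_aeval_ne_zero _ _).1 hres
      (algebraMap _ (vints v hna ⧸ vmax v hna) x)
    simp only [coe_aeval_eq_eval, eval_map_apply, hx₀, map_mul,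
      (residue_eq_zero_iff _).2 hlt, mul_zero, ne_eq, not_true, or_self] at hcop
  have hder : ((derivative (X * Ψ 1 - Ψ 0)).eval x : vints v hna) =
      ((Ψ 1).eval x : vints v hna) * (1 - mult ψ (x : K)) := by
    have hψ₀ : (ψ 0).eval (x : K) = x * (ψ 1).eval (x : K) := by
      simpa [ψ, eval_lift] using congr_arg Subtype.val hx₀
    have hψ₁ : (ψ 1).eval (x : K) = ((Ψ 1).eval x : vints v hna) := eval_lift (Ψ 1) x
    have hne : (ψ 1).eval (x : K) ≠ 0 := by simp [← v.ne_zero_iff, hψ₁, hx₁]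
    have := eval_derivative_X_mul_sub hψ₀ hne
    rwa [hmap, derivative_map, eval_lift, hψ₁] at this
  have hle := abs_le_abs_of_dvd (sub_dvd_eval_derivative (isRoot hx) (isRoot hy) hxy)
  rwa [hder, map_mul, hx₁, one_mul] at hle

/-- The conjugate of the rational function `φ` by the Möbius transformation `B` has good
reduction. As in `PotGoodRed`, it is pinned down by its action on `P¹(K)` and given by a pair of
polynomials with integral coefficients. -/
def GoodReductionAt (v : AbsoluteValue K ℝ) (hna : IsNonarchimedean (⇑v)) [DecidableEq K]
    (φ : Fin 2 → K[X]) (B : GL (Fin 2) K) : Prop :=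
  ∃ Ψ : Fin 2 → (vints v hna)[X], GoodRep v hna (Ψ 0) (Ψ 1) ∧ GoodRed v hna (Ψ 0) (Ψ 1) ∧
    Function.Semiconj (B • ·) (ratMap φ) (ratMap (Polynomial.map (algebraMap _ K) ∘ Ψ))

variable [DecidableEq K]

lemma GoodReductionAt.exists_isLowestTerms [Infinite K] {d : ℕ} (hd : 1 ≤ d) {φ : Fin 2 → K[X]}
    (hφ : IsLowestTerms d φ) {B : GL (Fin 2) K} (h : GoodReductionAt v hna φ B) :
    ∃ Ψ : Fin 2 → (vints v hna)[X], IsLowestTerms d (Polynomial.map (algebraMap _ K) ∘ Ψ) ∧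
      IsLowestTerms d (Polynomial.map (algebraMap _ (vints v hna ⧸ vmax v hna)) ∘ Ψ) ∧
      Function.Semiconj (B • ·) (ratMap φ) (ratMap (Polynomial.map (algebraMap _ K) ∘ Ψ)) := by
  obtain ⟨Ψ, hrep, hred, hsemi⟩ := h
  obtain ⟨e, hlift, hres⟩ := goodRep_and_goodRed_iff.1 ⟨hrep, hred⟩
  obtain rfl : e = d :=
    hlift.2.symm.trans (isLowestTerms_and_mult_eq_of_semiconj hd hφ hlift.1 hsemi).1.2
  exact ⟨Ψ, hlift, hres, hsemi⟩

/-- `U` belongs to `GL₂(O)`: it has integral entries and its determinant is a unit of `O`. -/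
def IsIntegralGL (v : AbsoluteValue K ℝ) (U : GL (Fin 2) K) : Prop :=
  (∀ i j, v (U i j) ≤ 1) ∧ v U.1.det = 1

lemma GoodReductionAt.mul [Infinite K] {d : ℕ} (hd : 1 ≤ d) {φ : Fin 2 → K[X]}
    (hφ : IsLowestTerms d φ) {B U : GL (Fin 2) K} (hU : IsIntegralGL v U)
    (h : GoodReductionAt v hna φ B) : GoodReductionAt v hna φ (U * B) := by
  obtain ⟨Ψ, hlift, hres, hsemi⟩ := h.exists_isLowestTerms hd hφ
  let V : Matrix (Fin 2) (Fin 2) (vints v hna) := .of fun i j ↦ ⟨U i j, hU.1 i j⟩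
  have hV : V.map (algebraMap _ K) = U.1 := rfl
  have hdet : (V.det : K) = U.1.det := by
    simp [Matrix.det_fin_two, V]
  have hres_det : (V.map (algebraMap _ (vints v hna ⧸ vmax v hna))).det ≠ 0 := by
    rw [← RingHom.mapMatrix_apply, ← RingHom.map_det, Ne, residue_eq_zero_iff, hdet, hU.2]
    exact lt_irrefl 1
  have hlift' := hlift.conj U.det_ne_zero
  have hres' := hres.conj hres_det
  have hsemi' := semiconj_ratMap_conj hd hlift U
  rw [← hV, ← map_comp_conj] at hlift' hsemi'
  rw [← map_comp_conj] at hres'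
  obtain ⟨hrep, hred⟩ := goodRep_and_goodRed_iff.2 ⟨d, hlift', hres'⟩
  refine ⟨conj d Ψ V, hrep, hred, ?_⟩
  simpa only [Function.comp_def, smul_smul] using hsemi'.comp_left hsemi

lemma GoodReductionAt.one_le_of_smul_eq_zero [Infinite K] {d : ℕ} (hd : 1 ≤ d) {φ : Fin 2 → K[X]}
    (hφ : IsLowestTerms d φ) {B : GL (Fin 2) K} (h : GoodReductionAt v hna φ B) {P Q : OnePoint K}
    (hP : ratMap φ P = P) (hQ : ratMap φ Q = Q) (hPQ : P ≠ Q) (hmult : 1 ≤ v (1 - mult φ P))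
    (hBP : B • P = (0 : K)) {z : K} (hBQ : B • Q = z) : 1 ≤ v z := by
  obtain ⟨Ψ, hlift, hres, hsemi⟩ := h.exists_isLowestTerms hd hφ
  by_contra! hz
  have hne : (0 : K) ≠ z := by
    rintro rfl
    exact hPQ (MulAction.injective B (hBP.trans hBQ.symm))
  have hψP := (hsemi P).symm
  have hψQ := (hsemi Q).symm
  simp only [hP, hQ, hBP, hBQ] at hψP hψQ
  have hle := abs_one_sub_mult_le_abs_sub hlift.1 hres.1 (x := 0) (y := ⟨z, hz.le⟩)
    (fun h ↦ hne (congr_arg Subtype.val h)) hψP hψQ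
  rw [ZeroMemClass.coe_zero, ← hBP,
    (isLowestTerms_and_mult_eq_of_semiconj hd hφ hlift.1 hsemi).2 P hP, sub_zero] at hle
  exact (hmult.trans hle).not_gt hz

lemma exists_isIntegralGL_smul_eq_zero (v : AbsoluteValue K ℝ) (Q : OnePoint K) :
    ∃ U : GL (Fin 2) K, IsIntegralGL v U ∧ U • Q = (0 : K) := by
  induction Q with
  | infty =>
    exact ⟨.mkOfDetNeZero !![0, -1; 1, 0] (by simp),
      by simp [IsIntegralGL, Fin.forall_fin_two], by simp [smul_infty_eq_ite]⟩
  | coe z =>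
    rcases le_or_gt (v z) 1 with hz | hz
    · exact ⟨.mkOfDetNeZero !![1, -z; 0, 1] (by simp),
        by simp [IsIntegralGL, Fin.forall_fin_two, hz], by simp [smul_some_eq_ite]⟩
    · have hz₀ : z ≠ 0 := v.pos_iff.1 (one_pos.trans hz)
      exact ⟨.mkOfDetNeZero !![z⁻¹, -1; 1, 0] (by simp),
        by simp [IsIntegralGL, Fin.forall_fin_two, inv_le_one_of_one_le₀ hz.le],
        by simp [smul_some_eq_ite, hz₀]⟩

lemma exists_isIntegralGL_smul_eq_infty {Q : OnePoint K} (hQ : ∀ z : K, Q = z → 1 ≤ v z) :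
    ∃ U : GL (Fin 2) K, IsIntegralGL v U ∧ U • ((0 : K) : OnePoint K) = (0 : K) ∧ U • Q = ∞ := by
  induction Q with
  | infty => exact ⟨1, by simp [IsIntegralGL, Fin.forall_fin_two], one_smul _ _, one_smul _ _⟩
  | coe z =>
    have hz : 1 ≤ v z := hQ z rfl
    have hz₀ : z ≠ 0 := v.pos_iff.1 (one_pos.trans_le hz)
    exact ⟨.mkOfDetNeZero !![1, 0; -z⁻¹, 1] (by simp),
      by simp [IsIntegralGL, Fin.forall_fin_two, inv_le_one_of_one_le₀ hz],
      by simp [smul_some_eq_ite], by simp [smul_some_eq_ite, hz₀]⟩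

lemma GoodReductionAt.exists_smul_eq_zero_smul_eq_infty [Infinite K] {d : ℕ} (hd : 1 ≤ d)
    {φ : Fin 2 → K[X]} (hφ : IsLowestTerms d φ) {B : GL (Fin 2) K} (h : GoodReductionAt v hna φ B)
    {P Q : OnePoint K} (hP : ratMap φ P = P) (hQ : ratMap φ Q = Q) (hPQ : P ≠ Q)
    (hmult : 1 ≤ v (1 - mult φ P)) :
    ∃ B', GoodReductionAt v hna φ B' ∧ B' • P = (0 : K) ∧ B' • Q = ∞ := by
  obtain ⟨U, hU, hUP⟩ := exists_isIntegralGL_smul_eq_zero v (B • P)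
  rw [smul_smul] at hUP
  have hUB := h.mul hd hφ hU
  obtain ⟨V, hV, hV₀, hVQ⟩ := exists_isIntegralGL_smul_eq_infty fun z hz ↦
    hUB.one_le_of_smul_eq_zero hd hφ hP hQ hPQ hmult hUP (z := z) hz
  exact ⟨V * (U * B), hUB.mul hd hφ hV, by rw [mul_smul, hUP, hV₀], by rw [mul_smul, hVQ]⟩

lemma GoodReductionAt.exists_smul_eq [Infinite K] {d : ℕ} (hd : 1 ≤ d) {φ : Fin 2 → K[X]}
    (hφ : IsLowestTerms d φ) {B : GL (Fin 2) K} (h : GoodReductionAt v hna φ B)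
    {P₁ P₂ P₃ : OnePoint K} (hP₁ : ratMap φ P₁ = P₁) (hP₂ : ratMap φ P₂ = P₂)
    (hP₃ : ratMap φ P₃ = P₃) (h₁₂ : P₁ ≠ P₂) (h₁₃ : P₁ ≠ P₃) (h₂₃ : P₂ ≠ P₃)
    (hmult₁ : 1 ≤ v (1 - mult φ P₁)) (hmult₃ : 1 ≤ v (1 - mult φ P₃)) :
    ∃ B', GoodReductionAt v hna φ B' ∧ B' • P₁ = (0 : K) ∧ B' • P₂ = (1 : K) ∧ B' • P₃ = ∞ := by
  obtain ⟨C, hC, hC₁, hC₃⟩ := h.exists_smul_eq_zero_smul_eq_infty hd hφ hP₁ hP₃ h₁₃ hmult₁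
  obtain ⟨y, hy⟩ : ∃ y : K, y = C • P₂ :=
    ne_infty_iff_exists.1 fun h ↦ h₂₃ (MulAction.injective C (h.trans hC₃.symm))
  have hy_ge : 1 ≤ v y := hC.one_le_of_smul_eq_zero hd hφ hP₁ hP₂ h₁₂ hmult₁ hC₁ hy.symm
  have hy₀ : y ≠ 0 := v.pos_iff.1 (one_pos.trans_le hy_ge)
  let S : GL (Fin 2) K := .mkOfDetNeZero !![0, 1; 1, 0] (by simp)
  have hS : IsIntegralGL v S := by simp [IsIntegralGL, S, Fin.forall_fin_two]
  have hS₃ : (S * C) • P₃ = (0 : K) := by simp [mul_smul, hC₃, S, smul_infty_eq_ite]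
  have hS₂ : (S * C) • P₂ = (y⁻¹ : K) := by simp [mul_smul, ← hy, S, smul_some_eq_ite, hy₀]
  have hy_inv : 1 ≤ v y⁻¹ :=
    (hC.mul hd hφ hS).one_le_of_smul_eq_zero hd hφ hP₃ hP₂ h₂₃.symm hmult₃ hS₃ hS₂
  have hvy : v y = 1 := by
    rw [map_inv₀] at hy_inv
    exact ((one_le_inv₀ (one_pos.trans_le hy_ge)).1 hy_inv).antisymm hy_ge
  let D : GL (Fin 2) K := .mkOfDetNeZero !![y⁻¹, 0; 0, 1] (by simp [hy₀])
  have hD : IsIntegralGL v D := by simp [IsIntegralGL, D, Fin.forall_fin_two, hvy]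
  refine ⟨D * C, hC.mul hd hφ hD, ?_, ?_, ?_⟩ <;> rw [mul_smul]
  · simp [hC₁, D, smul_some_eq_ite]
  · simp [← hy, D, smul_some_eq_ite, hy₀]
  · simp [hC₃, D, smul_infty_eq_ite]

lemma smul_eq_self_of_smul_zero_one_infty {B : GL (Fin 2) K}
    (h₀ : B • ((0 : K) : OnePoint K) = (0 : K)) (h₁ : B • ((1 : K) : OnePoint K) = (1 : K))
    (h_infty : B • (∞ : OnePoint K) = ∞) (P : OnePoint K) : B • P = P := by
  have h10 : B 1 0 = 0 := smul_infty_eq_self_iff.1 h_infty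
  have hdet := B.det_ne_zero
  simp only [Matrix.det_fin_two, h10, mul_zero, sub_zero, mul_ne_zero_iff] at hdet
  have h01 : B 0 1 = 0 := by
    simpa [smul_some_eq_ite, h10, hdet] using h₀
  have h00 : B 0 0 = B 1 1 := by
    simpa [smul_some_eq_ite, h10, h01, hdet, div_eq_one_iff_eq] using h₁
  induction P with
  | infty => exact h_infty
  | coe x => simp [smul_some_eq_ite, h10, h01, h00, hdet, mul_div_cancel_left₀]

lemma smul_eq_smul_of_smul_eq_zero_one_infty {B B' : GL (Fin 2) K} {P₁ P₂ P₃ : OnePoint K}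
    (h₁ : B • P₁ = (0 : K)) (h₂ : B • P₂ = (1 : K)) (h₃ : B • P₃ = ∞)
    (h₁' : B' • P₁ = (0 : K)) (h₂' : B' • P₂ = (1 : K)) (h₃' : B' • P₃ = ∞) (P : OnePoint K) :
    B • P = B' • P := by
  have h {Q R : OnePoint K} (hB : B • Q = R) (hB' : B' • Q = R) : (B * B'⁻¹) • R = R := by
    rw [← hB', mul_smul, inv_smul_smul, hB, hB']
  have := smul_eq_self_of_smul_zero_one_infty (h h₁ h₁') (h h₂ h₂') (h h₃ h₃') (B' • P)
  rwa [mul_smul, inv_smul_smul] at this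

lemma exists_goodReductionAt_iff [Infinite K] {d : ℕ} (hd : 1 ≤ d) {φ : Fin 2 → K[X]}
    (hφ : IsLowestTerms d φ) {P₁ P₂ P₃ : OnePoint K} (hP₁ : ratMap φ P₁ = P₁)
    (hP₂ : ratMap φ P₂ = P₂) (hP₃ : ratMap φ P₃ = P₃)
    (hmult₁ : 1 ≤ v (1 - mult φ P₁)) (hmult₃ : 1 ≤ v (1 - mult φ P₃)) {B : GL (Fin 2) K}
    (hB₁ : B • P₁ = (0 : K)) (hB₂ : B • P₂ = (1 : K)) (hB₃ : B • P₃ = ∞) :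
    (∃ B', GoodReductionAt v hna φ B') ↔ GoodReductionAt v hna φ B := by
  have ne {Q R q r : OnePoint K} (hQ : B • Q = q) (hR : B • R = r) (hqr : q ≠ r) : Q ≠ R := by
    rintro rfl
    exact hqr (hQ.symm.trans hR)
  refine ⟨fun ⟨B', h⟩ ↦ ?_, fun h ↦ ⟨B, h⟩⟩
  obtain ⟨B', h', h₁, h₂, h₃⟩ := h.exists_smul_eq hd hφ hP₁ hP₂ hP₃ (ne hB₁ hB₂ (by simp))
    (ne hB₁ hB₃ (by simp)) (ne hB₂ hB₃ (by simp)) hmult₁ hmult₃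
  have hsmul : (B' • · : OnePoint K → OnePoint K) = (B • ·) :=
    funext (smul_eq_smul_of_smul_eq_zero_one_infty h₁ h₂ h₃ hB₁ hB₂ hB₃)
  simpa only [GoodReductionAt, hsmul] using h'

end GoodReduction

section PotentiallyGoodReduction

variable {v : AbsoluteValue K ℝ} {hna : IsNonarchimedean (⇑v)} [DecidableEq K]

lemma goodReductionAt_iff {f g : K[X]} {B : GL (Fin 2) K} :
    GoodReductionAt v hna ![f, g] B ↔
      ∃ F G : (vints v hna)[X], GoodRep v hna F G ∧ GoodRed v hna F G ∧
        rmap (liftp v hna F) (liftp v hna G) ∘ mob (B 0 0) (B 0 1) (B 1 0) (B 1 1) =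
          mob (B 0 0) (B 0 1) (B 1 0) (B 1 1) ∘ rmap f g := by
  have hmob : mob (B 0 0) (B 0 1) (B 1 0) (B 1 1) = (B • · : OnePoint K → OnePoint K) :=
    funext (mob_eq_smul B)
  have hsemi (Ψ : Fin 2 → (vints v hna)[X]) :
      Function.Semiconj (B • ·) (ratMap ![f, g]) (ratMap (Polynomial.map (algebraMap _ K) ∘ Ψ)) ↔
        rmap (liftp v hna (Ψ 0)) (liftp v hna (Ψ 1)) ∘ mob (B 0 0) (B 0 1) (B 1 0) (B 1 1) =
          mob (B 0 0) (B 0 1) (B 1 0) (B 1 1) ∘ rmap f g := by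
    rw [Function.semiconj_iff_comp_eq, hmob, eq_comm]
    rfl
  simp only [GoodReductionAt, hsemi]
  exact ⟨fun ⟨Ψ, h⟩ ↦ ⟨Ψ 0, Ψ 1, h⟩, fun ⟨F, G, h⟩ ↦ ⟨![F, G], h⟩⟩

lemma potGoodRed_iff_exists_goodReductionAt {f g : K[X]} :
    PotGoodRed v hna f g ↔ ∃ B, GoodReductionAt v hna ![f, g] B := by
  constructor
  · rintro ⟨a, b, c, d, hdet, h⟩
    exact ⟨.mkOfDetNeZero !![a, b; c, d] (by rwa [Matrix.det_fin_two_of]),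
      goodReductionAt_iff.2 h⟩
  · rintro ⟨B, hB⟩
    exact ⟨B 0 0, B 0 1, B 1 0, B 1 1, by simpa [Matrix.det_fin_two] using B.det_ne_zero,
      goodReductionAt_iff.1 hB⟩

end PotentiallyGoodReduction

theorem pot_good_reduction_iff_attracting_case_general {K : Type*} [Field K] [IsAlgClosed K]
    (v : AbsoluteValue K ℝ) (hna : IsNonarchimedean (⇑v))
    (f g : Polynomial K) (hcop : IsCoprime f g)
    (hdeg : 1 ≤ max f.natDegree g.natDegree)
    (hmult : ∀ p : Option K, rmap f g p = p → 1 ≤ v (1 - multiplier f g p)) :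
    {p : Option K | rmap f g p = p}.ncard = max f.natDegree g.natDegree + 1 ∧
      ∀ x₁ x₂ x₃ : Option K, rmap f g x₁ = x₁ → rmap f g x₂ = x₂ → rmap f g x₃ = x₃ →
        ∀ a b c d : K, a * d - b * c ≠ 0 →
          mob a b c d x₁ = some 0 → mob a b c d x₂ = some 1 → mob a b c d x₃ = none →
          (PotGoodRed v hna f g ↔
            ∃ F G : Polynomial (vints v hna), GoodRep v hna F G ∧ GoodRed v hna F G ∧
              rmap (liftp v hna F) (liftp v hna G) ∘ mob a b c d = mob a b c d ∘ rmap f g) := by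
  classical
  have hφ : IsLowestTerms (max f.natDegree g.natDegree) ![f, g] := ⟨hcop, rfl⟩
  constructor
  · have mult_ne_one (P : OnePoint K) (hP : ratMap ![f, g] P = P) : mult ![f, g] P ≠ 1 := by
      intro h
      have : 1 ≤ v (1 - mult ![f, g] P) := hmult P hP
      norm_num [h] at this
    exact (ncard_ratMap_eq_self hdeg hφ mult_ne_one :)
  · intro x₁ x₂ x₃ hx₁ hx₂ hx₃ a b c d hdet h₁ h₂ h₃
    let B : GL (Fin 2) K := .mkOfDetNeZero !![a, b; c, d] (by rwa [Matrix.det_fin_two_of])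
    have hB (P : OnePoint K) : B • P = mob a b c d P := (mob_eq_smul B P).symm
    rw [potGoodRed_iff_exists_goodReductionAt, exists_goodReductionAt_iff hdeg hφ hx₁ hx₂ hx₃
      (hmult x₁ hx₁) (hmult x₃ hx₃) ((hB x₁).trans h₁) ((hB x₂).trans h₂) ((hB x₃).trans h₃)]
    exact goodReductionAt_iff

/-- Theorem, Case 2: let `φ = f/g` have degree `d ≥ 2` and suppose every
fixed point of `φ` in `P¹(K)` is attracting.  Then `φ` has exactly `d + 1` distinct fixed
points; and for any three distinct fixed points `x₁, x₂, x₃` and the Möbius transformation `h`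
with `h(x₁) = 0`, `h(x₂) = 1`, `h(x₃) = ∞`, the map `φ` has potentially good reduction if and
only if `ψ = h ∘ φ ∘ h⁻¹` has good reduction. -/
theorem pot_good_reduction_iff_attracting_case {K : Type*} [Field K] [IsAlgClosed K]
    (v : AbsoluteValue K ℝ) (hna : IsNonarchimedean (⇑v))
    (f g : Polynomial K) (hcop : IsCoprime f g)
    (hdeg : 2 ≤ max f.natDegree g.natDegree)
    (hattr : ∀ p : Option K, rmap f g p = p → v (multiplier f g p) < 1) :
    {p : Option K | rmap f g p = p}.ncard = max f.natDegree g.natDegree + 1 ∧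
      ∀ x₁ x₂ x₃ : Option K, rmap f g x₁ = x₁ → rmap f g x₂ = x₂ → rmap f g x₃ = x₃ →
        x₁ ≠ x₂ → x₁ ≠ x₃ → x₂ ≠ x₃ →
        ∀ a b c d : K, a * d - b * c ≠ 0 →
          mob a b c d x₁ = some 0 → mob a b c d x₂ = some 1 → mob a b c d x₃ = none →
          (PotGoodRed v hna f g ↔
            ∃ F G : Polynomial (vints v hna), GoodRep v hna F G ∧ GoodRed v hna F G ∧
              rmap (liftp v hna F) (liftp v hna G) ∘ mob a b c d = mob a b c d ∘ rmap f g) := by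
  have hmult (p : Option K) (hp : rmap f g p = p) : 1 ≤ v (1 - multiplier f g p) := by
    simpa [(hattr p hp).not_ge] using hna (1 - multiplier f g p) (multiplier f g p)
  have h := pot_good_reduction_iff_attracting_case_general v hna f g hcop (by omega) hmult
  exact ⟨h.1, fun x₁ x₂ x₃ h₁ h₂ h₃ _ _ _ ↦ h.2 x₁ x₂ x₃ h₁ h₂ h₃⟩

end PaperPGR
end
end
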